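/- For every integer d ≥ 1, the genus 0 Hurwitz number satisfies H_{0,d} = (2d−2)! · d^{d−3} / d! in ℚ. Equivalently, the number of (2d−2)-tuples (τ₁, …, τ_{2d−2}) of transpositions in the symmetric group S_d whose product τ₁τ₂⋯τ_{2d−2} is the identity and which generate a subgroup acting transitively on the d letters equals (2d−2)! · d^{d−3} (i.e., this count times d³ equals (2d−2)! · d^d). -/

import Mathlib

/-- The number of `r`-tuples `(τ₁, …, τ_r)` of transpositions in the symmetric group on
`d` letters whose product `τ₁ ⬝ τ₂ ⋯ τ_r` is the identity and which generate a subgroup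
acting transitively on the `d` letters. -/
noncomputable def hurwitzTupleCount (d r : ℕ) : ℕ :=
  Nat.card {τ : Fin r → Equiv.Perm (Fin d) //
    (∀ i, (τ i).IsSwap) ∧ (List.ofFn τ).prod = 1 ∧
    ∀ x y : Fin d, ∃ σ ∈ Subgroup.closure (Set.range τ), σ x = y}

/-- The Hurwitz number `H_{g,d}`: `1/d!` times the number of `(2g - 2 + 2d)`-tuples of
transpositions in `S_d` with product the identity, generating a transitive subgroup. -/
noncomputable def hurwitzNumber (g d : ℕ) : ℚ :=
  (hurwitzTupleCount d (2 * g + 2 * d - 2) : ℚ) / (Nat.factorial d : ℚ)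

/-!
Let `N(r, σ, P)` be the number of `r`-tuples of transpositions with product `σ` generating a group
with orbit partition `P`. Removing the last transposition expresses `N(r + 1, σ, P)` through the
numbers `N(r, σ * swap a b, P')`. The Riemann–Hurwitz inequality bounds `r` from below in terms of
`σ` and `P`; when it is an equality, either `a` and `b` lie in different cycles of `σ` in the same
class of `P` and `P' = P`, or they lie in the same cycle and `P'` arises from `P` by cutting a class
in two. This recursion is solved by `r! * ∏ C, w(#C) * ∏ B, #B ^ (k B - 3)`, where `C` runs over the
cycles of `σ`, `B` over the classes of `P`, `k B` is the number of cycles in `B`, and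
`w(s) = s ^ (s + 1) / s!`. To see this it suffices to sum the join and cut terms within each class
`B`: Abel's identity in Hurwitz's form evaluates the sum over the ways to cut `B`, and what remains
are convolutions of the coefficients `s ^ s / s!`, which cancel between the join and the cut terms.
The theorem is the case `σ = 1`, `P = ⊤`.
-/

namespace CutJoin

open Finset

/-! ### Convolutions of the coefficients `s ^ s / s!` -/

/-- The numbers `s ^ s / s!`, the coefficients of `1 / (1 - T)` for the tree series
`T = X exp T`. -/
noncomputable def endoCoeff (s : ℕ) : ℚ := (s : ℚ) ^ s / s.factorial

theorem endoCoeff_zero : endoCoeff 0 = 1 := by simp [endoCoeff]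

theorem endoCoeff_pos (s : ℕ) : 0 < endoCoeff s := by
  rcases s.eq_zero_or_pos with rfl | hs
  · simp [endoCoeff]
  · unfold endoCoeff; positivity

/-- The convolution of `endoCoeff` with itself, the first factor being divided by `s + x`; the
extreme terms `s = 0` and `s = p` are left out. -/
noncomputable def endoConv (p : ℕ) (x : ℚ) : ℚ :=
  ∑ s ∈ Ico 1 p, endoCoeff s * endoCoeff (p - s) / (s + x)

theorem prod_range_erase_sub {K : Type*} [CommRing K] (s m : ℕ) :
    ∏ i ∈ (range (s + m + 1)).erase s, ((i : K) - s) = (-1) ^ s * s.factorial * m.factorial := by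
  induction m with
  | zero =>
    rw [add_zero, range_add_one, erase_insert notMem_range_self, Nat.factorial_zero, Nat.cast_one,
      mul_one, ← prod_range_add_one_eq_factorial, Nat.cast_prod, ← prod_range_reflect]
    conv_rhs => rw [← card_range s]
    rw [← prod_const, card_range, ← prod_mul_distrib]
    refine prod_congr rfl fun i hi => ?_
    rw [Nat.sub_sub, Nat.cast_sub (by have := mem_range.mp hi; omega)]
    push_cast
    ring
  | succ m ih =>
    rw [← add_assoc, range_add_one, erase_insert_of_ne (by omega),
      prod_insert (by simp), ih, Nat.factorial_succ]
    push_cast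
    ring

theorem pow_div_prod_add_eq_sum {K : Type*} [Field K] [CharZero K] (k : ℕ) {x : K}
    (hx : ∀ i : ℕ, x + (i + 1) ≠ 0) :
    x ^ k / ∏ i ∈ range (k + 1), (x + (i + 1)) =
      ∑ s ∈ range (k + 1), (-1) ^ (k - s) * ((s : K) + 1) ^ k /
        (s.factorial * (k - s).factorial * (x + (s + 1))) := by
  set v : ℕ → K := fun i => -((i : K) + 1) with hv
  have v_inj : Set.InjOn v (range (k + 1)) := fun i _ j _ h => by simpa [hv] using h
  have degree_lt : (Polynomial.X ^ k : Polynomial K).degree < #(range (k + 1)) := by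
    rw [Polynomial.degree_X_pow, card_range]; exact_mod_cast k.lt_succ_self
  have interp := congrArg (Polynomial.eval x) (Lagrange.eq_interpolate v_inj degree_lt)
  have sub_v (i : ℕ) : x - v i = x + (i + 1) := by rw [hv]; ring
  rw [Lagrange.eval_interpolate_not_at_node _ fun i _ => sub_ne_zero.mp (sub_v i ▸ hx i),
    Lagrange.eval_nodal, Polynomial.eval_pow, Polynomial.eval_X, prod_congr rfl fun i _ => sub_v i]
    at interp
  rw [interp, mul_div_cancel_left₀ _ (prod_ne_zero_iff.mpr fun i _ => hx i)]
  refine sum_congr rfl fun s hs => ?_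
  obtain ⟨m, rfl⟩ := Nat.exists_eq_add_of_le (Nat.lt_succ_iff.mp (mem_range.mp hs))
  have weight : Lagrange.nodalWeight (range (s + m + 1)) v s =
      ((-1) ^ s * s.factorial * m.factorial : K)⁻¹ := by
    rw [Lagrange.nodalWeight, prod_inv_distrib, ← prod_range_erase_sub]
    congr 1
    exact prod_congr rfl fun i _ => by rw [hv]; ring
  have node_pow : v s ^ (s + m) = (-1) ^ m * (-1) ^ s * ((s : K) + 1) ^ (s + m) := by
    rw [← pow_add, add_comm m, ← mul_pow, neg_one_mul]
  rw [weight, sub_v, Polynomial.eval_pow, Polynomial.eval_X, node_pow, Nat.add_sub_cancel_left]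
  have := hx s
  have : (s.factorial : K) ≠ 0 := mod_cast s.factorial_ne_zero
  have : (m.factorial : K) ≠ 0 := mod_cast m.factorial_ne_zero
  field_simp

theorem add_pow_div_factorial {K : Type*} [Field K] [CharZero K] (a b : K) (n : ℕ) :
    (a + b) ^ n / n.factorial =
      ∑ k ∈ range (n + 1), a ^ k / k.factorial * (b ^ (n - k) / (n - k).factorial) := by
  have hn : (n.factorial : K) ≠ 0 := mod_cast n.factorial_ne_zero
  rw [add_pow, sum_div]
  refine sum_congr rfl fun k hk => ?_
  rw [Nat.cast_choose K (Nat.lt_succ_iff.mp (mem_range.mp hk))]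
  field_simp

theorem endoCoeff_succ (s : ℕ) : endoCoeff (s + 1) = ((s : ℚ) + 1) ^ s / s.factorial := by
  rw [endoCoeff, Nat.factorial_succ, pow_succ]
  push_cast
  field_simp

/-- Decompose the right side into partial fractions; the residue at `-s` is then a binomial
expansion of `(p - s) ^ (p - s)`. -/
theorem sum_endoCoeff_mul_div (p : ℕ) {x : ℚ} (hx : 0 ≤ x) :
    ∑ s ∈ range p, endoCoeff (s + 1) * endoCoeff (p - (s + 1)) / ((s + 1 : ℕ) + x) =
      ∑ k ∈ range p, (p : ℚ) ^ (p - (k + 1)) / (p - (k + 1)).factorial *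
        (x ^ k / ∏ i ∈ range (k + 1), (x + (i + 1))) := by
  simp only [pow_div_prod_add_eq_sum _ fun i : ℕ => (by positivity : x + ((i : ℚ) + 1) ≠ 0),
    mul_sum]
  rw [sum_comm' (s' := fun s => Ico s p) (t' := range p)
    (fun k s => by simp only [mem_range, mem_Ico]; omega)]
  refine sum_congr rfl fun s hs => ?_
  obtain ⟨n, rfl⟩ := Nat.exists_eq_add_of_lt (mem_range.mp hs)
  have residue : ((n : ℚ) ^ n / n.factorial) = ∑ m ∈ range (n + 1),
      (-((s : ℚ) + 1)) ^ m / m.factorial *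
        (((s + n + 1 : ℕ) : ℚ) ^ (n - m) / (n - m).factorial) := by
    rw [← add_pow_div_factorial]
    push_cast
    ring
  rw [endoCoeff_succ, show s + n + 1 - (s + 1) = n by omega, endoCoeff, residue, mul_sum, sum_div,
    sum_Ico_eq_sum_range, show s + n + 1 - s = n + 1 by omega]
  refine sum_congr rfl fun m _ => ?_
  rw [Nat.add_sub_cancel_left, show s + n + 1 - (s + m + 1) = n - m by omega, neg_pow, pow_add]
  push_cast
  field_simp
  ring

theorem endoConv_add_endoCoeff_div {p : ℕ} (hp : 0 < p) {x : ℚ} (hx : 0 ≤ x) :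
    endoConv p x + endoCoeff p / (p + x) =
      ∑ k ∈ range p, (p : ℚ) ^ (p - (k + 1)) / (p - (k + 1)).factorial *
        (x ^ k / ∏ i ∈ range (k + 1), (x + (i + 1))) := by
  obtain ⟨n, rfl⟩ := Nat.exists_eq_add_one.mpr hp
  rw [← sum_endoCoeff_mul_div _ hx, sum_range_succ, Nat.sub_self, endoCoeff_zero, mul_one,
    endoConv, sum_Ico_eq_sum_range]
  simp only [Nat.add_sub_cancel, add_comm 1]

theorem endoConv_zero {p : ℕ} (hp : 0 < p) :
    endoConv p 0 = endoCoeff p - endoCoeff p / p := by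
  obtain ⟨n, rfl⟩ := Nat.exists_eq_add_one.mpr hp
  have h := endoConv_add_endoCoeff_div n.succ_pos le_rfl
  rw [sum_range_succ', sum_eq_zero fun k _ => by rw [zero_pow k.succ_ne_zero, zero_div, mul_zero],
    add_zero] at h
  rw [eq_sub_iff_add_eq, h, endoCoeff_succ]
  simp

theorem mul_endoCoeff_mul_endoConv {p : ℕ} (hp : 0 < p) (q : ℕ) :
    q * endoCoeff q * (endoConv p q + endoCoeff p / (p + q)) =
      ∑ k ∈ range p, (q : ℚ) ^ (q + (k + 1)) / (q + (k + 1)).factorial *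
        ((p : ℚ) ^ (p - (k + 1)) / (p - (k + 1)).factorial) := by
  rw [endoConv_add_endoCoeff_div hp q.cast_nonneg, mul_sum]
  refine sum_congr rfl fun k _ => ?_
  have rising : ((q + (k + 1)).factorial : ℚ) =
      q.factorial * ∏ i ∈ range (k + 1), ((q : ℚ) + (i + 1)) := by
    rw [← Nat.factorial_mul_ascFactorial, Nat.ascFactorial_eq_prod_range]
    push_cast
    simp only [add_comm (1 : ℚ), add_assoc]
  have : ∏ i ∈ range (k + 1), ((q : ℚ) + (i + 1)) ≠ 0 :=
    prod_ne_zero_iff.mpr fun i _ => by positivity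
  rw [rising, endoCoeff, pow_add, pow_succ]
  field_simp

/-- The binomial expansion of `(p + q) ^ (p + q)` splits at `p ^ p * q ^ q` into two sums of the
form evaluated in `mul_endoCoeff_mul_endoConv`. -/
theorem endoCoeff_add {p q : ℕ} (hp : 0 < p) (hq : 0 < q) :
    endoCoeff (p + q) = 2 * endoCoeff p * endoCoeff q + q * endoCoeff q * endoConv p q +
      p * endoCoeff p * endoConv q p := by
  have expansion : endoCoeff (p + q) =
      q * endoCoeff q * (endoConv p q + endoCoeff p / (p + q)) + endoCoeff p * endoCoeff q +
        p * endoCoeff p * (endoConv q p + endoCoeff q / (q + p)) := by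
    rw [mul_endoCoeff_mul_endoConv hp, mul_endoCoeff_mul_endoConv hq, endoCoeff, Nat.cast_add,
      add_pow_div_factorial, add_assoc p, sum_range_add, sum_range_succ', ← sum_range_reflect,
      add_comm (∑ k ∈ range q, _), ← add_assoc]
    congr 1
    · congr 1
      · refine sum_congr rfl fun k hk => ?_
        have := mem_range.mp hk
        rw [show p - 1 - k = p - (k + 1) by omega,
          show p + q - (p - (k + 1)) = q + (k + 1) by omega, mul_comm]
      · rw [add_zero, Nat.add_sub_cancel_left, endoCoeff, endoCoeff]
    · exact sum_congr rfl fun k _ => by rw [Nat.add_sub_add_left]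
  rw [expansion]
  field_simp
  ring

/-! ### Hurwitz's form of Abel's identity -/

section Abel

variable {ι K : Type*} [DecidableEq ι]

theorem sum_powerset_sum_sdiff {M : Type*} [AddCommMonoid M] (J : Finset ι)
    (f : Finset ι → ι → M) :
    ∑ S ∈ J.powerset, ∑ i ∈ J \ S, f S i = ∑ i ∈ J, ∑ S ∈ (J.erase i).powerset, f S i :=
  sum_comm' fun S i => by
    simp only [mem_powerset, mem_sdiff, subset_erase]
    tauto

theorem sum_powerset_sdiff_swap {M : Type*} [AddCommMonoid M] (J : Finset ι)
    (f : Finset ι → Finset ι → M) :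
    ∑ S ∈ J.powerset, f S (J \ S) = ∑ S ∈ J.powerset, f (J \ S) S :=
  sum_nbij' (J \ ·) (J \ ·) (by simp) (by simp)
    (fun _ hS => Finset.sdiff_sdiff_eq_self (mem_powerset.mp hS))
    (fun _ hS => Finset.sdiff_sdiff_eq_self (mem_powerset.mp hS))
    (fun _ hS => by rw [Finset.sdiff_sdiff_eq_self (mem_powerset.mp hS)])

variable [Field K] {z : ι → K} {J : Finset ι}

/-- The Abel polynomial `X * (X + ∑ i ∈ S, z i) ^ (#S - 1)` of a finite family of weights, read as
`1` when `S` is empty. -/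
noncomputable def abelPoly (z : ι → K) (S : Finset ι) : Polynomial K :=
  if S = ∅ then 1 else .X * (.X + .C (∑ i ∈ S, z i)) ^ (#S - 1)

theorem abelPoly_empty (z : ι → K) : abelPoly z ∅ = 1 := if_pos rfl

theorem eval_zero_abelPoly (S : Finset ι) :
    (abelPoly z S).eval 0 = if S = ∅ then 1 else 0 := by
  unfold abelPoly; split_ifs <;> simp

theorem eval_abelPoly {x : K} (hx : x ≠ 0) (S : Finset ι) :
    (abelPoly z S).eval x = x * (x + ∑ i ∈ S, z i) ^ ((#S : ℤ) - 1) := by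
  rcases S.eq_empty_or_nonempty with rfl | hS
  · simp [abelPoly_empty, hx]
  · rw [abelPoly, if_neg hS.ne_empty, ← Nat.cast_pred hS.card_pos, zpow_natCast]
    simp only [Polynomial.eval_mul, Polynomial.eval_X, Polynomial.eval_pow, Polynomial.eval_add,
      Polynomial.eval_C]

theorem comp_abelPoly_erase {S : Finset ι} {i : ι} (hi : i ∈ S) (hS : 1 < #S) :
    (abelPoly z (S.erase i)).comp (.X + .C (z i)) =
      (.X + .C (z i)) * (.X + .C (∑ j ∈ S, z j)) ^ (#S - 2) := by
  have hne : S.erase i ≠ ∅ := by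
    rw [← nonempty_iff_ne_empty, ← card_pos, card_erase_of_mem hi]; omega
  rw [abelPoly, if_neg hne, card_erase_of_mem hi, ← add_sum_erase S z hi, Nat.sub_sub]
  simp [add_assoc]

theorem derivative_abelPoly (S : Finset ι) :
    (abelPoly z S).derivative =
      ∑ i ∈ S, (abelPoly z (S.erase i)).comp (.X + .C (z i)) := by
  rcases S.eq_empty_or_nonempty with rfl | hS
  · simp [abelPoly_empty]
  obtain hcard | hcard := (Nat.succ_le_of_lt hS.card_pos).eq_or_lt'
  · obtain ⟨i, rfl⟩ := card_eq_one.mp hcard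
    simp [abelPoly]
  obtain ⟨k, hk⟩ := Nat.exists_eq_add_of_lt hcard
  rw [sum_congr rfl fun i hi => comp_abelPoly_erase hi hcard, ← sum_mul, sum_add_distrib, sum_const,
    abelPoly, if_neg hS.ne_empty, ← map_sum, show #S - 1 = k + 1 by omega,
    show #S - 2 = k by omega, hk]
  simp only [Polynomial.derivative_mul, Polynomial.derivative_X, Polynomial.derivative_X_add_C_pow,
    Nat.add_sub_cancel, map_natCast]
  push_cast
  ring

section CharZero

variable [CharZero K]

theorem polynomial_ext_of_derivative {p q : Polynomial K} (h : p.derivative = q.derivative)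
    (h_zero : p.eval 0 = q.eval 0) : p = q := by
  have hC := Polynomial.eq_C_of_derivative_eq_zero (p := p - q) (by rw [map_sub, h, sub_self])
  rw [Polynomial.coeff_zero_eq_eval_zero, Polynomial.eval_sub, h_zero, sub_self, map_zero] at hC
  exact sub_eq_zero.mp hC

theorem sum_abelPoly_mul_abelPoly (x : K) (J : Finset ι) :
    ∑ S ∈ J.powerset, .C ((abelPoly z S).eval x) * abelPoly z (J \ S) =
      (abelPoly z J).comp (.X + .C x) := by
  induction J using Finset.eraseInduction with | _ J ih
  apply polynomial_ext_of_derivative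
  · simp only [Polynomial.derivative_sum, Polynomial.derivative_C_mul, derivative_abelPoly, mul_sum]
    rw [sum_powerset_sum_sdiff J fun S i =>
      .C ((abelPoly z S).eval x) * (abelPoly z ((J \ S).erase i)).comp (.X + .C (z i)),
      Polynomial.derivative_comp, derivative_abelPoly]
    simp only [Polynomial.derivative_X_add_C, one_mul, Polynomial.sum_comp]
    refine sum_congr rfl fun i hi => ?_
    have shifted := congrArg (·.comp (.X + .C (z i))) (ih i hi)
    simp only [Polynomial.sum_comp, Polynomial.mul_comp, Polynomial.C_comp, Polynomial.comp_assoc,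
      Polynomial.add_comp, Polynomial.X_comp, erase_sdiff_comm] at shifted ⊢
    rw [shifted, add_right_comm]
  · simp only [Polynomial.eval_finsetSum, Polynomial.eval_mul, Polynomial.eval_C,
      eval_zero_abelPoly, Polynomial.eval_comp, Polynomial.eval_add, Polynomial.eval_X, zero_add,
      sdiff_eq_empty_iff_subset]
    rw [sum_eq_single_of_mem J (mem_powerset_self J) fun S hS hne => ?_]
    · simp
    · rw [if_neg fun h => hne ((mem_powerset.mp hS).antisymm h), mul_zero]

theorem sum_eval_abelPoly_mul_eval_abelPoly (x y : K) (J : Finset ι) :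
    ∑ S ∈ J.powerset, (abelPoly z S).eval x * (abelPoly z (J \ S)).eval y =
      (abelPoly z J).eval (x + y) := by
  have h := congrArg (Polynomial.eval y) (sum_abelPoly_mul_abelPoly (z := z) x J)
  simpa [Polynomial.eval_finsetSum, Polynomial.eval_comp, add_comm y] using h

end CharZero

/-! ### The sum over the ways to split a block -/

section Positive

variable [LinearOrder K] [IsStrictOrderedRing K]

/-- The sum over the ways of sharing out the elements of `J` between two parts of weights `x` and
`y`, a part with `k` elements and total weight `w` counting for `w ^ (k - 2)`. -/
noncomputable def splitSum (z : ι → K) (J : Finset ι) (x y : K) : K :=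
  ∑ S ∈ J.powerset, (x + ∑ i ∈ S, z i) ^ ((#S : ℤ) - 2) *
    (y + ∑ i ∈ J \ S, z i) ^ ((#(J \ S) : ℤ) - 2)

theorem mul_zpow_card_sub_two (hz : ∀ i ∈ J, 0 < z i) {y : K} (hy : 0 < y) :
    y * (y + ∑ i ∈ J, z i) ^ ((#J : ℤ) - 2) = (abelPoly z J).eval y / y -
      ∑ i ∈ J, z i / (y + z i) * (abelPoly z (J.erase i)).eval (y + z i) := by
  have total_ne : y + ∑ i ∈ J, z i ≠ 0 := (add_pos_of_pos_of_nonneg hy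
    (sum_nonneg fun i hi => (hz i hi).le)).ne'
  have term (i) (hi : i ∈ J) : z i / (y + z i) * (abelPoly z (J.erase i)).eval (y + z i) =
      z i * (y + ∑ i ∈ J, z i) ^ ((#J : ℤ) - 2) := by
    have := (add_pos hy (hz i hi)).ne'
    rw [eval_abelPoly this, card_erase_of_mem hi, Nat.cast_pred (card_pos.mpr ⟨i, hi⟩), add_assoc,
      add_sum_erase J z hi, sub_sub, one_add_one_eq_two]
    field_simp
  rw [sum_congr rfl term, ← sum_mul, eval_abelPoly hy.ne',
    show (#J : ℤ) - 1 = #J - 2 + 1 by ring, zpow_add_one₀ total_ne]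
  field_simp
  ring

theorem sum_eval_abelPoly_mul_zpow (hz : ∀ i ∈ J, 0 < z i) {x y : K} (hx : 0 < x) (hy : 0 < y) :
    ∑ S ∈ J.powerset, (abelPoly z S).eval x *
        (y * (y + ∑ i ∈ J \ S, z i) ^ ((#(J \ S) : ℤ) - 2)) =
      (x + y) / y * (x + y + ∑ i ∈ J, z i) ^ ((#J : ℤ) - 1) -
        (∑ i ∈ J, z i * (x + y + z i) / (y + z i)) *
          (x + y + ∑ i ∈ J, z i) ^ ((#J : ℤ) - 2) := by
  have expand (S) (_ : S ∈ J.powerset) := congrArg ((abelPoly z S).eval x * ·)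
    (mul_zpow_card_sub_two (fun i hi => hz i (sdiff_subset hi)) hy (J := J \ S))
  simp only [mul_sub, mul_sum] at expand
  rw [sum_congr rfl expand, sum_sub_distrib, sum_powerset_sum_sdiff J fun S i =>
    (abelPoly z S).eval x * (z i / (y + z i) * (abelPoly z ((J \ S).erase i)).eval (y + z i))]
  congr 1
  · simp only [← mul_div_assoc]
    rw [← sum_div, sum_eval_abelPoly_mul_eval_abelPoly, eval_abelPoly (add_pos hx hy).ne']
    ring
  · rw [sum_mul]
    refine sum_congr rfl fun i hi => ?_
    simp only [mul_left_comm _ (z i / (y + z i)), ← erase_sdiff_comm]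
    rw [← mul_sum, sum_eval_abelPoly_mul_eval_abelPoly,
      eval_abelPoly (add_pos hx (add_pos hy (hz i hi))).ne', card_erase_of_mem hi,
      Nat.cast_pred (card_pos.mpr ⟨i, hi⟩), ← add_assoc, add_assoc (x + y), add_sum_erase J z hi,
      sub_sub, one_add_one_eq_two]
    ring

/-- The total weight is the sum of the weights of the two parts, so multiplying by it leaves one
Abel polynomial and one power in each term. -/
theorem total_mul_splitSum (hz : ∀ i ∈ J, 0 < z i) {x y : K} (hx : 0 < x) (hy : 0 < y) :
    (x + y + ∑ i ∈ J, z i) * (x * y * splitSum z J x y) =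
      (∑ S ∈ J.powerset, (abelPoly z S).eval x *
        (y * (y + ∑ i ∈ J \ S, z i) ^ ((#(J \ S) : ℤ) - 2))) +
      ∑ S ∈ J.powerset, (abelPoly z S).eval y *
        (x * (x + ∑ i ∈ J \ S, z i) ^ ((#(J \ S) : ℤ) - 2)) := by
  rw [sum_powerset_sdiff_swap J fun S T => (abelPoly z S).eval y *
    (x * (x + ∑ i ∈ T, z i) ^ ((#T : ℤ) - 2)), ← sum_add_distrib, splitSum, mul_sum, mul_sum]
  refine sum_congr rfl fun S hS => ?_
  rw [mem_powerset] at hS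
  have part_ne {w : K} (hw : 0 < w) {T : Finset ι} (hT : T ⊆ J) : w + ∑ i ∈ T, z i ≠ 0 :=
    (add_pos_of_pos_of_nonneg hw (sum_nonneg fun i hi => (hz i (hT hi)).le)).ne'
  rw [eval_abelPoly hx.ne', eval_abelPoly hy.ne', show (#S : ℤ) - 1 = #S - 2 + 1 by ring,
    show (#(J \ S) : ℤ) - 1 = #(J \ S) - 2 + 1 by ring, zpow_add_one₀ (part_ne hx hS),
    zpow_add_one₀ (part_ne hy sdiff_subset), ← sum_sdiff hS]
  ring

theorem mul_splitSum (hz : ∀ i ∈ J, 0 < z i) {x y : K} (hx : 0 < x) (hy : 0 < y) :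
    x * y * splitSum z J x y =
      (x + y) * (1 / x + 1 / y) * (x + y + ∑ i ∈ J, z i) ^ ((#J : ℤ) - 2) -
        (∑ i ∈ J, z i * (x + y + z i) * (1 / (x + z i) + 1 / (y + z i))) *
          (x + y + ∑ i ∈ J, z i) ^ ((#J : ℤ) - 3) := by
  have total_ne : x + y + ∑ i ∈ J, z i ≠ 0 := (add_pos_of_pos_of_nonneg (add_pos hx hy)
    (sum_nonneg fun i hi => (hz i hi).le)).ne'
  refine mul_left_cancel₀ total_ne ?_
  rw [total_mul_splitSum hz hx hy, sum_eval_abelPoly_mul_zpow hz hx hy,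
    sum_eval_abelPoly_mul_zpow hz hy hx, add_comm y x, show (#J : ℤ) - 1 = #J - 3 + 1 + 1 by ring,
    show (#J : ℤ) - 2 = #J - 3 + 1 by ring, zpow_add_one₀ total_ne, zpow_add_one₀ total_ne]
  simp only [mul_add, sum_add_distrib, mul_one_div]
  ring

end Positive

end Abel

/-! ### The join and cut rates of a block -/

theorem sum_endoCoeff_mul_one_div_add (p : ℕ) (x : ℚ) :
    ∑ s ∈ Ico 1 p, endoCoeff s * endoCoeff (p - s) * (1 / (s + x) + 1 / ((p - s : ℕ) + x)) =
      2 * endoConv p x := by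
  have reflect : ∑ s ∈ Ico 1 p, endoCoeff s * endoCoeff (p - s) / ((p - s : ℕ) + x) =
      endoConv p x := by
    refine sum_nbij' (p - ·) (p - ·) ?_ ?_ ?_ ?_ fun s hs => ?_
    all_goals simp only [mem_Ico] at *
    any_goals omega
    rw [Nat.sub_sub_self hs.2.le, mul_comm (endoCoeff s)]
  simp only [mul_add, mul_one_div, sum_add_distrib]
  rw [reflect, ← endoConv, two_mul]

/-- The weight `s ^ (s + 1) / s!` of a cycle of length `s`. -/
noncomputable def cycleWeight (s : ℕ) : ℚ := s * endoCoeff s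

theorem cycleWeight_pos {s : ℕ} (hs : 0 < s) : 0 < cycleWeight s :=
  mul_pos (mod_cast hs) (endoCoeff_pos s)

variable {ι : Type*} [DecidableEq ι] {μ : ι → ℕ} {I J : Finset ι}

theorem sum_cycleWeight_mul_splitSum (hμ : ∀ i ∈ J, 0 < μ i) (p : ℕ) :
    ∑ s ∈ Ico 1 p, cycleWeight s * cycleWeight (p - s) *
        splitSum (fun i => (μ i : ℚ)) J s (p - s : ℕ) =
      2 * p * endoConv p 0 * (p + ∑ i ∈ J, (μ i : ℚ)) ^ ((#J : ℤ) - 2) -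
        2 * (∑ i ∈ J, μ i * (p + μ i) * endoConv p (μ i)) *
          (p + ∑ i ∈ J, (μ i : ℚ)) ^ ((#J : ℤ) - 3) := by
  set n : ℚ := p + ∑ i ∈ J, (μ i : ℚ)
  have term (s) (hs : s ∈ Ico 1 p) : cycleWeight s * cycleWeight (p - s) *
        splitSum (fun i => (μ i : ℚ)) J s (p - s : ℕ) =
      p * (endoCoeff s * endoCoeff (p - s) * (1 / (s + 0) + 1 / ((p - s : ℕ) + 0))) *
          n ^ ((#J : ℤ) - 2) -
        (∑ i ∈ J, μ i * (p + μ i) *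
          (endoCoeff s * endoCoeff (p - s) * (1 / (s + μ i) + 1 / ((p - s : ℕ) + μ i)))) *
          n ^ ((#J : ℤ) - 3) := by
    obtain ⟨hs, hsp⟩ := mem_Ico.mp hs
    have split := mul_splitSum (z := fun i => (μ i : ℚ)) (J := J) (fun i hi => mod_cast hμ i hi)
      (x := (s : ℚ)) (y := (p - s : ℕ)) (mod_cast hs) (mod_cast Nat.sub_pos_of_lt hsp)
    rw [← Nat.cast_add, Nat.add_sub_cancel' hsp.le] at split
    calc _ = endoCoeff s * endoCoeff (p - s) *
            (s * (p - s : ℕ) * splitSum (fun i => (μ i : ℚ)) J s (p - s : ℕ)) := by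
          rw [cycleWeight, cycleWeight]; ring
      _ = _ := by
          rw [split, mul_sub, sum_mul, sum_mul, mul_sum, add_zero, add_zero]
          congr 1
          · ring
          · exact sum_congr rfl fun i _ => by ring
  rw [sum_congr rfl term, sum_sub_distrib, ← sum_mul, ← sum_mul, ← mul_sum, sum_comm]
  simp only [← mul_sum, sum_endoCoeff_mul_one_div_add]
  congr 1
  · ring
  · simp only [mul_sum, mul_left_comm _ (2 : ℚ)]

/-- For a block whose cycles have lengths `μ i`, `i ∈ I`, the sum over the letters outside the
`i`-th cycle of the weight of the block after that letter is joined to a letter of the `i`-th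
cycle, relative to the product of the old cycle weights. -/
noncomputable def joinRate (μ : ι → ℕ) (I : Finset ι) (i : ι) : ℚ :=
  (∑ j ∈ I.erase i, μ j * (cycleWeight (μ i + μ j) / (cycleWeight (μ i) * cycleWeight (μ j)))) *
    (∑ j ∈ I, (μ j : ℚ)) ^ ((#I : ℤ) - 4)

/-- The analogue of `joinRate` for cutting the `i`-th cycle into two, the other cycles being shared
out between the two new blocks in all possible ways. -/
noncomputable def cutRate (μ : ι → ℕ) (I : Finset ι) (i : ι) : ℚ :=
  ∑ s ∈ Ico 1 (μ i), cycleWeight s * cycleWeight (μ i - s) / cycleWeight (μ i) *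
    splitSum (fun j => (μ j : ℚ)) (I.erase i) s (μ i - s : ℕ)

/-- The part of the join rate that cancels against the cut rate. -/
noncomputable def exchangeTerm (p q : ℕ) : ℚ := q * (p + q) * endoConv p q / endoCoeff p

theorem mul_joinRate (hμ : ∀ i ∈ I, 0 < μ i) {i : ι} (hi : i ∈ I) :
    μ i * joinRate μ I i =
      (∑ j ∈ I.erase i, (2 * (μ i + μ j) + exchangeTerm (μ i) (μ j) + exchangeTerm (μ j) (μ i))) *
        (∑ j ∈ I, (μ j : ℚ)) ^ ((#I : ℤ) - 4) := by
  rw [joinRate, ← mul_assoc, mul_sum]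
  congr 1
  refine sum_congr rfl fun j hj => ?_
  have hi' := hμ i hi
  have hj' := hμ j (mem_of_mem_erase hj)
  have := (endoCoeff_pos (μ i)).ne'
  have := (endoCoeff_pos (μ j)).ne'
  rw [cycleWeight, cycleWeight, cycleWeight, endoCoeff_add hi' hj', exchangeTerm, exchangeTerm]
  push_cast
  field_simp
  ring

theorem mul_cutRate (hμ : ∀ i ∈ I, 0 < μ i) {i : ι} (hi : i ∈ I) :
    μ i * cutRate μ I i =
      2 * (μ i - 1) * (∑ j ∈ I, (μ j : ℚ)) ^ ((#I : ℤ) - 3) -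
        2 * (∑ j ∈ I.erase i, exchangeTerm (μ i) (μ j)) *
          (∑ j ∈ I, (μ j : ℚ)) ^ ((#I : ℤ) - 4) := by
  have hi' := hμ i hi
  have coeff_ne := (endoCoeff_pos (μ i)).ne'
  have cuts := sum_cycleWeight_mul_splitSum (fun j hj => hμ j (mem_of_mem_erase hj)) (μ i)
    (J := I.erase i)
  rw [endoConv_zero hi', add_sum_erase I (fun j => (μ j : ℚ)) hi, card_erase_of_mem hi,
    Nat.cast_pred (card_pos.mpr ⟨i, hi⟩), show (#I : ℤ) - 1 - 2 = #I - 3 by ring,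
    show (#I : ℤ) - 1 - 3 = #I - 4 by ring] at cuts
  have exchange : ∑ j ∈ I.erase i, exchangeTerm (μ i) (μ j) =
      (∑ j ∈ I.erase i, μ j * (μ i + μ j) * endoConv (μ i) (μ j)) / endoCoeff (μ i) := by
    rw [sum_div]; rfl
  simp only [cutRate, div_mul_eq_mul_div]
  rw [← sum_div, cuts, exchange, cycleWeight]
  field_simp

theorem sum_mul_joinRate_add_cutRate (hI : I.Nonempty) (hμ : ∀ i ∈ I, 0 < μ i) :
    ∑ i ∈ I, μ i * (joinRate μ I i + cutRate μ I i) =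
      2 * (∑ i ∈ I, (μ i : ℚ) + #I - 2) * (∑ i ∈ I, (μ i : ℚ)) ^ ((#I : ℤ) - 3) := by
  set n := ∑ i ∈ I, (μ i : ℚ) with hn
  have n_pos : 0 < n := sum_pos (fun i hi => mod_cast hμ i hi) hI
  have swap_sum (f : ι → ι → ℚ) :
      ∑ i ∈ I, ∑ j ∈ I.erase i, f j i = ∑ i ∈ I, ∑ j ∈ I.erase i, f i j :=
    sum_comm' fun _ _ => by simp only [mem_erase]; tauto
  have sum_other : ∑ i ∈ I, ∑ _j ∈ I.erase i, (μ i : ℚ) = (#I - 1) * n := by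
    rw [hn, mul_sum]
    refine sum_congr rfl fun i hi => ?_
    rw [sum_const, card_erase_of_mem hi, nsmul_eq_mul, Nat.cast_pred (card_pos.mpr ⟨i, hi⟩)]
  have term (i) (hi : i ∈ I) : μ i * (joinRate μ I i + cutRate μ I i) =
      ((∑ j ∈ I.erase i, 2 * (μ i + μ j : ℚ)) + (∑ j ∈ I.erase i, exchangeTerm (μ j) (μ i)) -
        (∑ j ∈ I.erase i, exchangeTerm (μ i) (μ j)) + 2 * (μ i - 1) * n) * n ^ ((#I : ℤ) - 4) := by
    rw [mul_add, mul_joinRate hμ hi, mul_cutRate hμ hi,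
      show (#I : ℤ) - 3 = #I - 4 + 1 by ring, zpow_add_one₀ n_pos.ne']
    simp only [sum_add_distrib]
    ring
  rw [sum_congr rfl term, ← sum_mul, sum_add_distrib, sum_sub_distrib, sum_add_distrib,
    swap_sum fun i j => exchangeTerm (μ i) (μ j), ← sum_mul, ← mul_sum, sum_sub_distrib, ← hn,
    show (#I : ℤ) - 3 = #I - 4 + 1 by ring, zpow_add_one₀ n_pos.ne']
  simp only [← mul_sum, sum_add_distrib]
  rw [swap_sum fun i _ => (μ i : ℚ), sum_other, sum_const, nsmul_eq_mul]
  ring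

/-! ### Blocks of equivalence relations -/

section Blocks

variable {α : Type*} [Fintype α] {P Q : Setoid α} {a x y : α} {B C : Finset α}

open Classical in
/-- The equivalence class of `x` as a finset. -/
noncomputable def block (P : Setoid α) (x : α) : Finset α := {y | P x y}

theorem mem_block : y ∈ block P x ↔ P x y := by
  simp only [block, mem_filter, mem_univ, true_and]

theorem mem_block_self (P : Setoid α) (x : α) : x ∈ block P x := mem_block.mpr (P.refl x)

theorem block_eq_block : block P x = block P y ↔ P x y := by
  refine ⟨fun h => mem_block.mp (h ▸ mem_block_self P y), fun h => ?_⟩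
  ext z
  simp only [mem_block]
  exact ⟨P.trans (P.symm h), P.trans h⟩

theorem card_block_pos (P : Setoid α) (x : α) : 0 < #(block P x) :=
  card_pos.mpr ⟨x, mem_block_self P x⟩

theorem block_subset_block (h : Q ≤ P) (hx : x ∈ block P a) : block Q x ⊆ block P a := fun _ hy =>
  mem_block.mpr (P.trans (mem_block.mp hx) (h (mem_block.mp hy)))

variable [DecidableEq α]

/-- The equivalence classes of `P` meeting `B`; this is mostly used for unions `B` of classes. -/
noncomputable def blocksIn (P : Setoid α) (B : Finset α) : Finset (Finset α) := B.image (block P)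

/-- The equivalence classes of `P`. -/
noncomputable abbrev blocks (P : Setoid α) : Finset (Finset α) := blocksIn P univ

theorem block_mem_blocksIn (P : Setoid α) (hx : x ∈ B) : block P x ∈ blocksIn P B :=
  mem_image_of_mem _ hx

theorem block_eq_of_mem (hC : C ∈ blocksIn P B) (hx : x ∈ C) : block P x = C := by
  obtain ⟨y, -, rfl⟩ := mem_image.mp hC
  exact block_eq_block.mpr (P.symm (mem_block.mp hx))

theorem card_pos_of_mem_blocksIn (hC : C ∈ blocksIn P B) : 0 < #C := by
  obtain ⟨x, -, rfl⟩ := mem_image.mp hC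
  exact card_block_pos P x

theorem biUnion_blocksIn (hB : ∀ x ∈ B, block P x ⊆ B) : (blocksIn P B).biUnion id = B := by
  rw [blocksIn, image_biUnion]
  exact (biUnion_subset.mpr hB).antisymm fun x hx => mem_biUnion.mpr ⟨x, hx, mem_block_self P x⟩

theorem sum_blocksIn {M : Type*} [AddCommMonoid M] (hB : ∀ x ∈ B, block P x ⊆ B) (f : α → M) :
    ∑ C ∈ blocksIn P B, ∑ x ∈ C, f x = ∑ x ∈ B, f x := by
  conv_rhs => rw [← biUnion_blocksIn hB]
  refine (sum_biUnion fun C hC D hD hne => disjoint_left.mpr fun x hxC hxD => hne ?_).symm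
  rw [← block_eq_of_mem hC hxC, ← block_eq_of_mem hD hxD]

theorem sum_comp_block {M : Type*} [AddCommMonoid M] (hB : ∀ x ∈ B, block P x ⊆ B)
    (f : Finset α → M) : ∑ x ∈ B, f (block P x) = ∑ C ∈ blocksIn P B, #C • f C := by
  rw [← sum_blocksIn hB]
  refine sum_congr rfl fun C hC => ?_
  rw [sum_congr rfl fun x hx => by rw [block_eq_of_mem hC hx], sum_const]

theorem sum_card_blocksIn (hB : ∀ x ∈ B, block P x ⊆ B) : ∑ C ∈ blocksIn P B, #C = #B := by
  rw [card_eq_sum_ones B, sum_comp_block hB fun _ => (1 : ℕ)]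
  simp only [smul_eq_mul, mul_one]

theorem sum_card_blocksIn_blocks (h : Q ≤ P) : ∑ B ∈ blocks P, #(blocksIn Q B) = #(blocks Q) := by
  have hdisj : (blocks P : Set (Finset α)).PairwiseDisjoint (blocksIn Q) := by
    refine fun B hB B' hB' hne => disjoint_left.mpr fun C hC hC' => hne ?_
    obtain ⟨x, hx, rfl⟩ := mem_image.mp hC
    obtain ⟨y, hy, hyx⟩ := mem_image.mp hC'
    rw [← block_eq_of_mem hB hx, ← block_eq_of_mem hB' hy]
    exact block_eq_block.mpr (P.symm (h (block_eq_block.mp hyx)))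
  rw [← card_biUnion hdisj]
  congr 1
  conv_rhs => rw [blocks, ← biUnion_blocksIn (P := P) fun x _ => subset_univ (block P x), blocksIn,
    biUnion_image]
  rfl

theorem blocksIn_eq_insert (P : Setoid α) (ha : a ∈ B) :
    blocksIn P B = insert (block P a) (blocksIn P (B \ block P a)) := by
  ext C
  simp only [blocksIn, mem_insert, mem_image, mem_sdiff, mem_block]
  constructor
  · rintro ⟨x, hx, rfl⟩
    by_cases hax : P a x
    · exact .inl (block_eq_block.mpr (P.symm hax))
    · exact .inr ⟨x, ⟨hx, hax⟩, rfl⟩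
  · rintro (rfl | ⟨x, hx, rfl⟩)
    · exact ⟨a, ha, rfl⟩
    · exact ⟨x, hx.1, rfl⟩

theorem block_notMem_blocksIn_sdiff (P : Setoid α) (a : α) (B : Finset α) :
    block P a ∉ blocksIn P (B \ block P a) := by
  intro h
  obtain ⟨x, hx, heq⟩ := mem_image.mp h
  exact (mem_sdiff.mp hx).2 (heq ▸ mem_block_self P x)

theorem card_blocksIn (P : Setoid α) (ha : a ∈ B) :
    #(blocksIn P B) = #(blocksIn P (B \ block P a)) + 1 := by
  rw [blocksIn_eq_insert P ha, card_insert_of_notMem (block_notMem_blocksIn_sdiff P a B)]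

theorem prod_blocksIn {M : Type*} [CommMonoid M] (P : Setoid α) (ha : a ∈ B) (f : Finset α → M) :
    ∏ C ∈ blocksIn P B, f C = f (block P a) * ∏ C ∈ blocksIn P (B \ block P a), f C := by
  rw [blocksIn_eq_insert P ha, prod_insert (block_notMem_blocksIn_sdiff P a B)]

/-- The `Q`-blocks, other than that of `a`, in the `P`-block of `a`. -/
noncomputable def otherBlocks (Q P : Setoid α) (a : α) : Finset (Finset α) :=
  blocksIn Q (block P a \ block Q a)

theorem erase_blocksIn_block (Q P : Setoid α) (a : α) :
    (blocksIn Q (block P a)).erase (block Q a) = otherBlocks Q P a := by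
  rw [blocksIn_eq_insert Q (mem_block_self P a), erase_insert (block_notMem_blocksIn_sdiff Q a _),
    otherBlocks]

theorem card_blocksIn_block (Q P : Setoid α) (a : α) :
    #(blocksIn Q (block P a)) = #(otherBlocks Q P a) + 1 :=
  card_blocksIn Q (mem_block_self P a)

theorem block_subset_sdiff_block (h : Q ≤ P) (hx : x ∈ block P a \ block Q a) :
    block Q x ⊆ block P a \ block Q a := by
  intro y hy
  obtain ⟨hxP, hxQ⟩ := mem_sdiff.mp hx
  refine mem_sdiff.mpr ⟨block_subset_block h hxP hy, fun hy' => hxQ (mem_block.mpr ?_)⟩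
  exact Q.trans (mem_block.mp hy') (Q.symm (mem_block.mp hy))

theorem biUnion_otherBlocks (h : Q ≤ P) (a : α) :
    (otherBlocks Q P a).biUnion id = block P a \ block Q a :=
  biUnion_blocksIn fun _ => block_subset_sdiff_block h

theorem card_block_eq_add_sum_otherBlocks (h : Q ≤ P) (a : α) :
    #(block P a) = #(block Q a) + ∑ D ∈ otherBlocks Q P a, #D := by
  rw [otherBlocks, sum_card_blocksIn fun _ => block_subset_sdiff_block h, add_comm,
    card_sdiff_add_card_eq_card (block_subset_block h (mem_block_self P a))]

end Blocks

/-! ### Merging two blocks -/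

section Merges

open Equiv Equiv.Perm

theorem sameCycle_setoid_le_iff {α : Type*} {σ : Perm α} {P : Setoid α} :
    SameCycle.setoid σ ≤ P ↔ ∀ x, P x (σ x) := by
  refine ⟨fun h x => h ⟨1, by rw [zpow_one]⟩, fun h => ?_⟩
  rintro x _ ⟨k, rfl⟩
  induction k using Int.induction_on with
  | zero => exact P.refl x
  | succ k ih => exact P.trans ih (by rw [add_comm, zpow_add, zpow_one]; exact h _)
  | pred k ih =>
    refine P.trans ih (P.symm ?_)
    have := h ((σ ^ (-(k : ℤ) - 1)) x)
    rwa [← Perm.mul_apply, ← zpow_one_add, add_sub_cancel] at this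

variable {α : Type*} [DecidableEq α] {P P' Q Q' : Setoid α} {a b x y : α}

theorem sameCycle_setoid_swap_le_iff : SameCycle.setoid (swap a b) ≤ P ↔ P a b := by
  rw [sameCycle_setoid_le_iff]
  refine ⟨fun h => by simpa only [swap_apply_left] using h a, fun h x => ?_⟩
  rw [swap_apply_def]
  split_ifs with hxa hxb
  · exact hxa ▸ h
  · exact hxb ▸ P.symm h
  · exact P.refl x

theorem sup_sameCycle_swap_rel : (P ⊔ SameCycle.setoid (swap a b)) x y ↔
    P x y ∨ (P x a ∧ P b y) ∨ (P x b ∧ P a y) := by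
  classical
  constructor
  · let f (x : α) : Quotient P := if P x b then ⟦a⟧ else ⟦x⟧
    have le_ker : P ⊔ SameCycle.setoid (swap a b) ≤ Setoid.ker f := by
      refine sup_le (fun x y h => ?_) (sameCycle_setoid_swap_le_iff.mpr ?_)
      · have : P x b ↔ P y b := ⟨P.trans (P.symm h), P.trans h⟩
        simp only [Setoid.ker_def, f, this, Quotient.sound h]
      · simp only [Setoid.ker_def, f, P.refl b, if_true, ite_self]
    intro h
    have := le_ker h
    simp only [Setoid.ker_def, f] at this
    split_ifs at this with hx hy hy
    · exact .inl (P.trans hx (P.symm hy))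
    · exact .inr (.inr ⟨hx, Quotient.exact this⟩)
    · exact .inr (.inl ⟨Quotient.exact this, P.symm hy⟩)
    · exact .inl (Quotient.exact this)
  · have hP : P ≤ P ⊔ SameCycle.setoid (swap a b) := le_sup_left
    have hab : (P ⊔ SameCycle.setoid (swap a b)) a b := sameCycle_setoid_swap_le_iff.mp le_sup_right
    rintro (h | ⟨hxa, hby⟩ | ⟨hxb, hay⟩)
    · exact hP h
    · exact Setoid.trans' _ (hP hxa) (Setoid.trans' _ hab (hP hby))
    · exact Setoid.trans' _ (hP hxb) (Setoid.trans' _ (Setoid.symm' _ hab) (hP hay))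

/-- `P` arises from `P'` by merging the distinct blocks of `a` and `b`. -/
structure Merges (P' P : Setoid α) (a b : α) : Prop where
  sup_eq : P' ⊔ SameCycle.setoid (swap a b) = P
  not_rel : ¬P' a b

namespace Merges

theorem rel_iff (h : Merges P' P a b) : P x y ↔ P' x y ∨ (P' x a ∧ P' b y) ∨ (P' x b ∧ P' a y) :=
  h.sup_eq ▸ sup_sameCycle_swap_rel

theorem le (h : Merges P' P a b) : P' ≤ P := h.sup_eq ▸ le_sup_left

theorem rel (h : Merges P' P a b) : P a b := h.rel_iff.mpr (.inr (.inl ⟨P'.refl a, P'.refl b⟩))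

theorem symm (h : Merges P' P a b) : Merges P' P b a :=
  ⟨by rw [swap_comm, h.sup_eq], fun hba => h.not_rel (P'.symm hba)⟩

variable [Fintype α] {B : Finset α}

theorem block_eq_union (h : Merges P' P a b) : block P a = block P' a ∪ block P' b := by
  ext y
  have := P'.refl a
  have := h.not_rel
  rw [mem_union, mem_block, mem_block, mem_block, h.rel_iff]
  tauto

theorem disjoint_block (h : Merges P' P a b) : Disjoint (block P' a) (block P' b) :=
  disjoint_left.mpr fun _ hx hx' =>
    h.not_rel (P'.trans (mem_block.mp hx) (P'.symm (mem_block.mp hx')))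

theorem card_block (h : Merges P' P a b) : #(block P a) = #(block P' a) + #(block P' b) := by
  rw [h.block_eq_union, card_union_of_disjoint h.disjoint_block]

theorem block_eq_of_not_rel (h : Merges P' P a b) (hx : ¬P a x) : block P' x = block P x := by
  ext y
  rw [mem_block, mem_block, h.rel_iff]
  refine ⟨.inl, ?_⟩
  rintro (hxy | ⟨hxa, -⟩ | ⟨hxb, -⟩)
  · exact hxy
  · exact absurd (P.symm (h.le hxa)) hx
  · exact absurd (P.trans h.rel (P.symm (h.le hxb))) hx

theorem blocksIn_eq (h : Merges P' P a b) (hB : ∀ x ∈ B, ¬P a x) : blocksIn P' B = blocksIn P B :=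
  image_congr fun x hx => h.block_eq_of_not_rel (hB x hx)

theorem blocksIn_sdiff (h : Merges P' P a b) (B : Finset α) :
    blocksIn P' ((B \ block P' a) \ block P' b) = blocksIn P (B \ block P a) := by
  rw [sdiff_sdiff_left, sup_eq_union, ← h.block_eq_union]
  exact h.blocksIn_eq fun x hx => mt mem_block.mpr (mem_sdiff.mp hx).2

theorem mem_sdiff_block (h : Merges P' P a b) (hb : b ∈ B) : b ∈ B \ block P' a :=
  mem_sdiff.mpr ⟨hb, mt mem_block.mp h.not_rel⟩

theorem card_blocksIn (h : Merges P' P a b) (ha : a ∈ B) (hb : b ∈ B) :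
    #(blocksIn P' B) = #(blocksIn P B) + 1 := by
  rw [CutJoin.card_blocksIn P' ha, CutJoin.card_blocksIn P' (h.mem_sdiff_block hb),
    h.blocksIn_sdiff, CutJoin.card_blocksIn P ha]

theorem card_blocks (h : Merges P' P a b) : #(blocks P') = #(blocks P) + 1 :=
  h.card_blocksIn (mem_univ a) (mem_univ b)

theorem prod_blocksIn {M : Type*} [CommMonoid M] (h : Merges P' P a b) (ha : a ∈ B) (hb : b ∈ B)
    (f : Finset α → M) : ∏ C ∈ blocksIn P' B, f C =
      f (block P' a) * (f (block P' b) * ∏ C ∈ blocksIn P (B \ block P a), f C) := by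
  rw [CutJoin.prod_blocksIn P' ha, CutJoin.prod_blocksIn P' (h.mem_sdiff_block hb),
    h.blocksIn_sdiff]

end Merges

end Merges

/-! ### Splitting a block along a cut cycle -/

section Split

variable {α : Type*} {P P' Q Q' : Setoid α} {a b x y : α} {A : Finset α}

/-- The refinement of `P` which separates `A` from its complement. -/
def separate (P : Setoid α) (A : Finset α) : Setoid α := P ⊓ Setoid.ker (· ∈ A)

theorem separate_rel : separate P A x y ↔ P x y ∧ (x ∈ A ↔ y ∈ A) := by
  rw [separate, Setoid.inf_iff_and, Setoid.ker_def, eq_iff_iff]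

variable [Fintype α]

theorem block_separate (hA : A ⊆ block P a) (ha : a ∈ A) : block (separate P A) a = A := by
  ext x
  rw [mem_block, separate_rel]
  exact ⟨fun h => h.2.mp ha, fun hx => ⟨mem_block.mp (hA hx), iff_of_true ha hx⟩⟩

variable [DecidableEq α]

theorem Merges.separate_block (h : Merges P' P a b) : separate P (block P' a) = P' := by
  ext x y
  rw [separate_rel, mem_block, mem_block]
  refine ⟨fun ⟨hP, hxy⟩ => ?_, fun hP' => ⟨h.le hP', fun ha => P'.trans ha hP',
    fun ha => P'.trans ha (P'.symm hP')⟩⟩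
  rcases h.rel_iff.mp hP with hP' | ⟨hxa, hby⟩ | ⟨hxb, hay⟩
  · exact hP'
  · exact absurd (P'.trans (hxy.mp (P'.symm hxa)) (P'.symm hby)) h.not_rel
  · exact absurd (P'.trans (hxy.mpr hay) hxb) h.not_rel

theorem merges_separate (hab : P a b) (hA : A ⊆ block P a) (ha : a ∈ A) (hb : b ∉ A) :
    Merges (separate P A) P a b := by
  refine ⟨?_, fun h => hb ((separate_rel.mp h).2.mp ha)⟩
  have rel_of_mem {x} (hx : x ∈ A) : P a x := mem_block.mp (hA hx)
  refine le_antisymm (sup_le inf_le_left (sameCycle_setoid_swap_le_iff.mpr hab)) fun x y hxy => ?_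
  refine sup_sameCycle_swap_rel.mpr ?_
  simp only [separate_rel, ha, hb, true_iff, false_iff, iff_true, iff_false]
  by_cases hx : x ∈ A <;> by_cases hy : y ∈ A
  · exact .inl ⟨hxy, iff_of_true hx hy⟩
  · exact .inr (.inl ⟨⟨P.symm (rel_of_mem hx), hx⟩,
      P.trans (P.symm hab) (P.trans (rel_of_mem hx) hxy), hy⟩)
  · exact .inr (.inr ⟨⟨P.trans hxy (P.trans (P.symm (rel_of_mem hy)) hab), hx⟩, rel_of_mem hy, hy⟩)
  · exact .inl ⟨hxy, iff_of_false hx hy⟩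

theorem otherBlocks_union_otherBlocks (hQ : Merges Q' Q a b) (hP : Merges P' P a b)
    (hle : Q' ≤ P') : otherBlocks Q' P' a ∪ otherBlocks Q' P' b = otherBlocks Q P a := by
  have sdiff_eq : (block P' a \ block Q' a) ∪ (block P' b \ block Q' b) =
      block P a \ block Q a := by
    rw [hP.block_eq_union, hQ.block_eq_union]
    ext x
    have ha : x ∈ block Q' a → x ∈ block P' a :=
      fun hx => block_subset_block hle (mem_block_self P' a) hx
    have hb : x ∈ block Q' b → x ∈ block P' b :=
      fun hx => block_subset_block hle (mem_block_self P' b) hx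
    have hab : x ∈ block P' a → x ∉ block P' b := fun hx => disjoint_left.mp hP.disjoint_block hx
    simp only [mem_union, mem_sdiff]
    tauto
  rw [otherBlocks, otherBlocks, otherBlocks, blocksIn, blocksIn, ← image_union, sdiff_eq]
  exact hQ.blocksIn_eq fun x hx => mt mem_block.mpr (mem_sdiff.mp hx).2

theorem disjoint_otherBlocks (hP : Merges P' P a b) (hle : Q' ≤ P') :
    Disjoint (otherBlocks Q' P' a) (otherBlocks Q' P' b) := by
  refine disjoint_left.mpr fun D ha hb => ?_
  obtain ⟨x, hx, rfl⟩ := mem_image.mp ha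
  obtain ⟨y, hy, hyx⟩ := mem_image.mp hb
  have hax : P' a x := mem_block.mp (mem_sdiff.mp hx).1
  have hby : P' b y := mem_block.mp (mem_sdiff.mp hy).1
  exact hP.not_rel (P'.trans hax (P'.symm (P'.trans hby (hle (block_eq_block.mp hyx)))))

theorem otherBlocks_sdiff_otherBlocks (hQ : Merges Q' Q a b) (hP : Merges P' P a b)
    (hle : Q' ≤ P') : otherBlocks Q P a \ otherBlocks Q' P' a = otherBlocks Q' P' b := by
  rw [← otherBlocks_union_otherBlocks hQ hP hle,
    union_sdiff_cancel_left (disjoint_otherBlocks hP hle)]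

section Rejoin

variable {S : Finset (Finset α)}

theorem exists_of_mem_otherBlocks (hQ : Merges Q' Q a b) {D : Finset α}
    (hD : D ∈ otherBlocks Q P a) : ∃ x, P a x ∧ ¬Q a x ∧ block Q' x = D := by
  obtain ⟨x, hx, rfl⟩ := mem_image.mp hD
  rw [mem_sdiff, mem_block, mem_block] at hx
  exact ⟨x, hx.1, hx.2, hQ.block_eq_of_not_rel hx.2⟩

theorem not_rel_of_mem_biUnion (hQ : Merges Q' Q a b) (hS : S ⊆ otherBlocks Q P a)
    (hx : x ∈ S.biUnion id) : ¬Q a x := by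
  obtain ⟨D, hD, hxD⟩ := mem_biUnion.mp hx
  obtain ⟨y, -, hy, rfl⟩ := exists_of_mem_otherBlocks hQ (hS hD)
  exact fun hax => hy (Q.trans hax (Q.symm (hQ.le (mem_block.mp hxD))))

theorem block_union_biUnion_subset (hQ : Merges Q' Q a b) (hle : Q ≤ P)
    (hS : S ⊆ otherBlocks Q P a) : block Q' a ∪ S.biUnion id ⊆ block P a := by
  refine union_subset (block_subset_block (hQ.le.trans hle) (mem_block_self P a))
    ((biUnion_subset_biUnion_of_subset_left id hS).trans ?_)
  rw [biUnion_otherBlocks hle]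
  exact sdiff_subset

theorem le_separate (hQ : Merges Q' Q a b) (hle : Q ≤ P) (hS : S ⊆ otherBlocks Q P a) :
    Q' ≤ separate P (block Q' a ∪ S.biUnion id) := by
  have stable {x y} (hxy : Q' x y) (hx : x ∈ block Q' a ∪ S.biUnion id) :
      y ∈ block Q' a ∪ S.biUnion id := by
    refine mem_union.mpr ((mem_union.mp hx).imp (fun hx => ?_) fun hx => ?_)
    · exact mem_block.mpr (Q'.trans (mem_block.mp hx) hxy)
    · obtain ⟨D, hD, hxD⟩ := mem_biUnion.mp hx
      obtain ⟨z, -, -, rfl⟩ := exists_of_mem_otherBlocks hQ (hS hD)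
      exact mem_biUnion.mpr ⟨_, hD, mem_block.mpr (Q'.trans (mem_block.mp hxD) hxy)⟩
  exact fun x y hxy => separate_rel.mpr ⟨hle (hQ.le hxy), stable hxy, stable (Q'.symm hxy)⟩

theorem merges_separate_biUnion (hQ : Merges Q' Q a b) (hle : Q ≤ P)
    (hS : S ⊆ otherBlocks Q P a) : Merges (separate P (block Q' a ∪ S.biUnion id)) P a b := by
  refine merges_separate (hle hQ.rel) (block_union_biUnion_subset hQ hle hS)
    (mem_union_left _ (mem_block_self Q' a)) fun hb => ?_
  rcases mem_union.mp hb with hb | hb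
  · exact hQ.not_rel (mem_block.mp hb)
  · exact not_rel_of_mem_biUnion hQ hS hb hQ.rel

theorem otherBlocks_separate (hQ : Merges Q' Q a b) (hle : Q ≤ P) (hS : S ⊆ otherBlocks Q P a) :
    otherBlocks Q' (separate P (block Q' a ∪ S.biUnion id)) a = S := by
  have hdisj : Disjoint (S.biUnion id) (block Q' a) := disjoint_left.mpr fun x hx hax =>
    not_rel_of_mem_biUnion hQ hS hx (hQ.le (mem_block.mp hax))
  rw [otherBlocks, block_separate (block_union_biUnion_subset hQ hle hS)
    (mem_union_left _ (mem_block_self Q' a)), union_sdiff_cancel_left hdisj.symm, blocksIn,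
    biUnion_image]
  refine (biUnion_congr rfl fun D hD => ?_).trans (biUnion_singleton_eq_self (s := S))
  obtain ⟨x, -, -, rfl⟩ := exists_of_mem_otherBlocks hQ (hS hD)
  exact (image_congr fun y hy => block_eq_block.mpr (Q'.symm (mem_block.mp hy))).trans
    (image_const ⟨x, mem_block_self Q' x⟩ _)

theorem Merges.separate_union_biUnion_otherBlocks (hP : Merges P' P a b) (hle : Q' ≤ P') :
    separate P (block Q' a ∪ (otherBlocks Q' P' a).biUnion id) = P' := by
  rw [biUnion_otherBlocks hle,
    union_sdiff_of_subset (block_subset_block hle (mem_block_self P' a)), hP.separate_block]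

end Rejoin

end Split

section Weight

variable {α : Type*} [Fintype α] [DecidableEq α] {P P' Q Q' : Setoid α} {a b : α}

/-- The factor of `cutJoinWeight Q P` which does not involve the size of the `P`-block of `a`. -/
noncomputable def weightAway (Q P : Setoid α) (a : α) : ℚ :=
  (∏ C ∈ blocks Q, cycleWeight #C) *
    ∏ B ∈ blocksIn P (univ \ block P a), (#B : ℚ) ^ ((#(blocksIn Q B) : ℤ) - 3)

/-- The number of ways, divided by `r!`, to write a permutation with cycles `Q` as a product of
`r` transpositions which generate a group with orbits `P`, when `r` is smallest possible. -/
noncomputable def cutJoinWeight (Q P : Setoid α) : ℚ :=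
  (∏ C ∈ blocks Q, cycleWeight #C) * ∏ B ∈ blocks P, (#B : ℚ) ^ ((#(blocksIn Q B) : ℤ) - 3)

theorem cutJoinWeight_eq_weightAway_mul (Q P : Setoid α) (a : α) : cutJoinWeight Q P =
    weightAway Q P a * (#(block P a) : ℚ) ^ ((#(blocksIn Q (block P a)) : ℤ) - 3) := by
  rw [cutJoinWeight, prod_blocksIn P (mem_univ a), weightAway]
  ring

theorem Merges.prod_zpow_card_blocksIn (h : Merges Q' Q a b) (hle : Q ≤ P) :
    ∏ B ∈ blocksIn P (univ \ block P a), (#B : ℚ) ^ ((#(blocksIn Q' B) : ℤ) - 3) =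
      ∏ B ∈ blocksIn P (univ \ block P a), (#B : ℚ) ^ ((#(blocksIn Q B) : ℤ) - 3) := by
  refine prod_congr rfl fun B hB => ?_
  obtain ⟨x, hx, rfl⟩ := mem_image.mp hB
  rw [h.blocksIn_eq fun y hy hay => (mem_sdiff.mp hx).2 ?_]
  exact mem_block.mpr (P.trans (hle hay) (P.symm (mem_block.mp hy)))

theorem Merges.prod_cycleWeight (h : Merges Q' Q a b) :
    ∏ C ∈ blocks Q', cycleWeight #C = (∏ C ∈ blocks Q, cycleWeight #C) *
      (cycleWeight #(block Q' a) * cycleWeight #(block Q' b) / cycleWeight #(block Q a)) := by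
  have := (cycleWeight_pos (card_block_pos Q a)).ne'
  rw [h.prod_blocksIn (mem_univ a) (mem_univ b), CutJoin.prod_blocksIn Q (mem_univ a)]
  field_simp

theorem Merges.weightAway_eq (h : Merges Q' Q a b) (hle : Q ≤ P) : weightAway Q' P a =
    weightAway Q P a *
      (cycleWeight #(block Q' a) * cycleWeight #(block Q' b) / cycleWeight #(block Q a)) := by
  rw [weightAway, weightAway, h.prod_zpow_card_blocksIn hle, h.prod_cycleWeight]
  ring

theorem Merges.cutJoinWeight_join (h : Merges Q' Q a b) (hle : Q ≤ P) : cutJoinWeight Q P =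
    weightAway Q' P a * (cycleWeight (#(block Q' a) + #(block Q' b)) /
      (cycleWeight #(block Q' a) * cycleWeight #(block Q' b)) *
      (#(block P a) : ℚ) ^ ((#(blocksIn Q' (block P a)) : ℤ) - 4)) := by
  have ha := (cycleWeight_pos (card_block_pos Q' a)).ne'
  have hb := (cycleWeight_pos (card_block_pos Q' b)).ne'
  have hab := (cycleWeight_pos (card_block_pos Q a)).ne'
  rw [cutJoinWeight_eq_weightAway_mul Q P a, h.weightAway_eq hle, ← h.card_block,
    h.card_blocksIn (mem_block_self P a) (mem_block.mpr (hle h.rel)), Nat.cast_succ,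
    show (#(blocksIn Q (block P a)) : ℤ) + 1 - 4 = #(blocksIn Q (block P a)) - 3 by ring]
  field_simp

theorem Merges.cutJoinWeight_cut (hP : Merges P' P a b) (hle : Q' ≤ P') :
    cutJoinWeight Q' P' = weightAway Q' P a *
      (((#(block Q' a) : ℚ) + ∑ D ∈ otherBlocks Q' P' a, (#D : ℚ)) ^
          ((#(otherBlocks Q' P' a) : ℤ) - 2) *
        ((#(block Q' b) : ℚ) + ∑ D ∈ otherBlocks Q' P' b, (#D : ℚ)) ^
          ((#(otherBlocks Q' P' b) : ℤ) - 2)) := by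
  have exponent (k : ℕ) : ((k + 1 : ℕ) : ℤ) - 3 = k - 2 := by push_cast; ring
  rw [cutJoinWeight, hP.prod_blocksIn (mem_univ a) (mem_univ b), weightAway,
    card_blocksIn_block, card_blocksIn_block, card_block_eq_add_sum_otherBlocks hle a,
    card_block_eq_add_sum_otherBlocks hle b, exponent, exponent]
  push_cast
  ring

noncomputable instance : Fintype (Setoid α) :=
  .ofInjective (fun P x y => P x y) fun _ _ h =>
    Setoid.ext fun x y => iff_of_eq (congrFun (congrFun h x) y)

open Classical in
theorem sum_cutJoinWeight_cut (hQ : Merges Q' Q a b) (hle : Q ≤ P) :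
    ∑ P' with Merges P' P a b ∧ Q' ≤ P', cutJoinWeight Q' P' =
      weightAway Q P a *
        (cycleWeight #(block Q' a) * cycleWeight #(block Q' b) / cycleWeight #(block Q a) *
          splitSum (fun D => (#D : ℚ)) (otherBlocks Q P a) #(block Q' a) #(block Q' b)) := by
  rw [← mul_assoc, ← hQ.weightAway_eq hle, splitSum, mul_sum]
  refine sum_bij' (fun P' _ => otherBlocks Q' P' a)
    (fun S _ => separate P (block Q' a ∪ S.biUnion id)) ?_ ?_ ?_ ?_ ?_
  all_goals simp only [mem_filter, mem_univ, true_and, mem_powerset]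
  · intro P' ⟨hP, hle'⟩
    rw [← otherBlocks_union_otherBlocks hQ hP hle']
    exact subset_union_left
  · exact fun S hS => ⟨merges_separate_biUnion hQ hle hS, le_separate hQ hle hS⟩
  · exact fun P' ⟨hP, hle'⟩ => hP.separate_union_biUnion_otherBlocks hle'
  · exact fun S hS => otherBlocks_separate hQ hle hS
  · intro P' ⟨hP, hle'⟩
    rw [hP.cutJoinWeight_cut hle', otherBlocks_sdiff_otherBlocks hQ hP hle']

end Weight

/-! ### Multiplying a permutation by a transposition -/

section Permutations

open Equiv Equiv.Perm Function

variable {α : Type*} {σ : Perm α} {a b : α} {s : ℕ}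

theorem sameCycle_setoid_apply (σ : Perm α) (x : α) : SameCycle.setoid σ x (σ x) :=
  sameCycle_apply_right.mpr (SameCycle.refl σ x)

theorem sameCycle_setoid_mul_le (σ τ : Perm α) :
    SameCycle.setoid (σ * τ) ≤ SameCycle.setoid σ ⊔ SameCycle.setoid τ := by
  have hσ : SameCycle.setoid σ ≤ SameCycle.setoid σ ⊔ SameCycle.setoid τ := le_sup_left
  have hτ : SameCycle.setoid τ ≤ SameCycle.setoid σ ⊔ SameCycle.setoid τ := le_sup_right
  exact sameCycle_setoid_le_iff.mpr fun x =>
    Setoid.trans' _ (hτ (sameCycle_setoid_apply τ x)) (hσ (sameCycle_setoid_apply σ (τ x)))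

theorem pow_apply_ne_self (hs : 0 < s) (hsp : s < minimalPeriod σ a) : (σ ^ s) a ≠ a := by
  rw [coe_pow]
  exact not_isPeriodicPt_of_pos_of_lt_minimalPeriod hs.ne' hsp

theorem pow_apply_injOn (σ : Perm α) (a : α) :
    Set.InjOn (fun s => (σ ^ s) a) (Set.Iio (minimalPeriod σ a)) := by
  simpa only [coe_pow] using iterate_injOn_Iio_minimalPeriod

theorem pow_minimalPeriod_apply (σ : Perm α) (a : α) : (σ ^ minimalPeriod σ a) a = a := by
  rw [coe_pow, iterate_minimalPeriod]

theorem minimalPeriod_pos [Finite α] (σ : Perm α) (a : α) : 0 < minimalPeriod σ a :=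
  minimalPeriod_pos_of_mem_periodicPts (σ.injective.mem_periodicPts a)

theorem exists_pow_apply_eq_of_sameCycle [Finite α] (h : SameCycle.setoid σ a b) :
    ∃ s < minimalPeriod σ a, (σ ^ s) a = b := by
  obtain ⟨n, rfl⟩ := SameCycle.exists_nat_pow_eq h
  refine ⟨n % minimalPeriod σ a, Nat.mod_lt _ (minimalPeriod_pos σ a), ?_⟩
  rw [coe_pow, coe_pow, iterate_mod_minimalPeriod_eq]

section Fintype

variable [Fintype α]

theorem block_sameCycle_setoid [DecidableEq α] (σ : Perm α) (a : α) :
    block (SameCycle.setoid σ) a = (range (minimalPeriod σ a)).image fun s => (σ ^ s) a := by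
  ext b
  simp only [mem_block, mem_image, mem_range]
  constructor
  · exact exists_pow_apply_eq_of_sameCycle
  · rintro ⟨s, -, rfl⟩
    exact sameCycle_pow_right.mpr (SameCycle.refl σ a)

theorem card_block_sameCycle_setoid (σ : Perm α) (a : α) :
    #(block (SameCycle.setoid σ) a) = minimalPeriod σ a := by
  classical
  rw [block_sameCycle_setoid, card_image_of_injOn, card_range]
  rw [coe_range]
  exact pow_apply_injOn σ a

theorem erase_block_sameCycle_setoid [DecidableEq α] (σ : Perm α) (a : α) :
    (block (SameCycle.setoid σ) a).erase a =
      (Ico 1 (minimalPeriod σ a)).image fun s => (σ ^ s) a := by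
  rw [block_sameCycle_setoid, range_eq_Ico,
    ← insert_Ico_add_one_left_eq_Ico (minimalPeriod_pos σ a),
    image_insert, pow_zero, Perm.one_apply, zero_add, erase_insert]
  intro h
  obtain ⟨s, hs, hsa⟩ := mem_image.mp h
  exact pow_apply_ne_self (mem_Ico.mp hs).1 (mem_Ico.mp hs).2 hsa

end Fintype

variable [DecidableEq α]

theorem sameCycle_setoid_mul_swap_sup (σ : Perm α) (a b : α) :
    SameCycle.setoid (σ * swap a b) ⊔ SameCycle.setoid (swap a b) =
      SameCycle.setoid σ ⊔ SameCycle.setoid (swap a b) := by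
  refine le_antisymm (sup_le (sameCycle_setoid_mul_le _ _) le_sup_right) (sup_le ?_ le_sup_right)
  have := sameCycle_setoid_mul_le (σ * swap a b) (swap a b)
  rwa [mul_swap_mul_self] at this

/-- Right multiplication by `swap a b` lets `b` follow the orbit of `a`, until that orbit
meets `a` or `b`. -/
theorem mul_swap_pow_apply (hs : 0 < s)
    (h : ∀ j, 0 < j → j < s → (σ ^ j) a ≠ a ∧ (σ ^ j) a ≠ b) :
    ((σ * swap a b) ^ s) b = (σ ^ s) a := by
  induction s, hs using Nat.le_induction with
  | base => rw [pow_one, pow_one, Perm.mul_apply, swap_apply_right]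
  | succ s hs ih =>
    obtain ⟨ha, hb⟩ := h s hs s.lt_succ_self
    rw [pow_succ', Perm.mul_apply, ih fun j hj hjs => h j hj (hjs.trans s.lt_succ_self),
      Perm.mul_apply, swap_apply_of_ne_of_ne ha hb, pow_succ', Perm.mul_apply]

theorem mul_swap_pow_apply_of_le {j : ℕ} (hsp : s < minimalPeriod σ a) (hj : 0 < j) (hjs : j ≤ s) :
    ((σ * swap a ((σ ^ s) a)) ^ j) ((σ ^ s) a) = (σ ^ j) a :=
  mul_swap_pow_apply hj fun i hi hij => ⟨pow_apply_ne_self hi (by omega), fun heq =>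
    (hij.trans_le hjs).ne (pow_apply_injOn σ a (Set.mem_Iio.mpr (by omega)) hsp heq)⟩

section Finite

variable [Finite α]

theorem merges_mul_swap_of_not_sameCycle (h : ¬SameCycle.setoid σ a b) :
    Merges (SameCycle.setoid σ) (SameCycle.setoid (σ * swap a b)) a b := by
  have hba : ((σ * swap a b) ^ minimalPeriod σ a) b = a := by
    rw [mul_swap_pow_apply (minimalPeriod_pos σ a), pow_minimalPeriod_apply]
    refine fun j hj hjp => ⟨pow_apply_ne_self hj hjp, ?_⟩
    rintro rfl
    exact h (sameCycle_pow_right.mpr (SameCycle.refl σ a))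
  refine ⟨?_, h⟩
  rw [← sameCycle_setoid_mul_swap_sup, sup_eq_left, sameCycle_setoid_swap_le_iff]
  exact SameCycle.symm ⟨minimalPeriod σ a, by rw [zpow_natCast, hba]⟩

theorem minimalPeriod_mul_swap (hs : 0 < s) (hsp : s < minimalPeriod σ a) :
    minimalPeriod (σ * swap a ((σ ^ s) a)) ((σ ^ s) a) = s := by
  have periodic : IsPeriodicPt (σ * swap a ((σ ^ s) a)) s ((σ ^ s) a) := by
    rw [IsPeriodicPt, IsFixedPt, ← coe_pow, mul_swap_pow_apply_of_le hsp hs le_rfl]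
  refine (periodic.minimalPeriod_le hs).antisymm (le_of_not_gt fun hlt => ?_)
  have hpos := minimalPeriod_pos (σ * swap a ((σ ^ s) a)) ((σ ^ s) a)
  have := pow_minimalPeriod_apply (σ * swap a ((σ ^ s) a)) ((σ ^ s) a)
  rw [mul_swap_pow_apply_of_le hsp hpos hlt.le] at this
  exact hlt.ne (pow_apply_injOn σ a (hlt.trans hsp) hsp this)

theorem merges_mul_swap_pow (hs : 0 < s) (hsp : s < minimalPeriod σ a) :
    Merges (SameCycle.setoid (σ * swap a ((σ ^ s) a))) (SameCycle.setoid σ) a ((σ ^ s) a) := by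
  refine ⟨?_, fun h => ?_⟩
  · rw [sameCycle_setoid_mul_swap_sup, sup_eq_left, sameCycle_setoid_swap_le_iff]
    exact sameCycle_pow_right.mpr (SameCycle.refl σ a)
  · obtain ⟨j, hj, hja⟩ := exists_pow_apply_eq_of_sameCycle (Setoid.symm' _ h)
    rw [minimalPeriod_mul_swap hs hsp] at hj
    rcases Nat.eq_zero_or_pos j with rfl | hj0
    · exact pow_apply_ne_self hs hsp hja
    · rw [mul_swap_pow_apply_of_le hsp hj0 hj.le] at hja
      exact pow_apply_ne_self hj0 (hj.trans hsp) hja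

theorem merges_mul_swap_of_sameCycle (h : SameCycle.setoid σ a b) (hab : a ≠ b) :
    Merges (SameCycle.setoid (σ * swap a b)) (SameCycle.setoid σ) a b := by
  obtain ⟨s, hsp, rfl⟩ := exists_pow_apply_eq_of_sameCycle h
  refine merges_mul_swap_pow (Nat.pos_of_ne_zero ?_) hsp
  rintro rfl
  exact hab rfl

end Finite

variable [Fintype α]

theorem card_block_mul_swap_right (hs : 0 < s) (hsp : s < minimalPeriod σ a) :
    #(block (SameCycle.setoid (σ * swap a ((σ ^ s) a))) ((σ ^ s) a)) = s := by
  rw [card_block_sameCycle_setoid, minimalPeriod_mul_swap hs hsp]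

theorem card_block_mul_swap_left (hs : 0 < s) (hsp : s < minimalPeriod σ a) :
    #(block (SameCycle.setoid (σ * swap a ((σ ^ s) a))) a) = minimalPeriod σ a - s := by
  rw [← card_block_sameCycle_setoid σ, (merges_mul_swap_pow hs hsp).card_block,
    card_block_mul_swap_right hs hsp, Nat.add_sub_cancel]

theorem sum_erase_block_mul_swap {M : Type*} [AddCommMonoid M] (σ : Perm α) (a : α)
    (f : ℕ → ℕ → M) :
    ∑ b ∈ (block (SameCycle.setoid σ) a).erase a,
        f #(block (SameCycle.setoid (σ * swap a b)) a)
          #(block (SameCycle.setoid (σ * swap a b)) b) =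
      ∑ s ∈ Ico 1 #(block (SameCycle.setoid σ) a),
        f s (#(block (SameCycle.setoid σ) a) - s) := by
  rw [erase_block_sameCycle_setoid, card_block_sameCycle_setoid, sum_image fun i hi j hj =>
    pow_apply_injOn σ a (mem_Ico.mp hi).2 (mem_Ico.mp hj).2]
  refine sum_nbij' (minimalPeriod σ a - ·) (minimalPeriod σ a - ·) ?_ ?_ ?_ ?_ fun s hs => ?_
  all_goals simp only [mem_Ico] at *
  any_goals omega
  rw [card_block_mul_swap_left hs.1 hs.2, card_block_mul_swap_right hs.1 hs.2,
    Nat.sub_sub_self hs.2.le]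

end Permutations

/-! ### The cut-and-join equation for the weights -/

section CutJoinEquation

open Equiv Equiv.Perm

variable {α : Type*} [Fintype α] [DecidableEq α] {σ : Perm α} {P : Setoid α}

/-- The total weight of the states reached from `(σ, P)` by joining the cycle of `a` with another
cycle in the same block. -/
noncomputable def joinSum (σ : Perm α) (P : Setoid α) (a : α) : ℚ :=
  ∑ b ∈ block P a \ block (SameCycle.setoid σ) a,
    cutJoinWeight (SameCycle.setoid (σ * swap a b)) P

open Classical in
/-- The total weight of the states reached from `(σ, P)` by cutting the cycle of `a` together with
the block containing it. -/
noncomputable def cutSum (σ : Perm α) (P : Setoid α) (a : α) : ℚ :=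
  ∑ b ∈ (block (SameCycle.setoid σ) a).erase a,
    ∑ P' with Merges P' P a b ∧ SameCycle.setoid (σ * swap a b) ≤ P',
      cutJoinWeight (SameCycle.setoid (σ * swap a b)) P'

theorem joinSum_eq (hle : SameCycle.setoid σ ≤ P) (a : α) :
    joinSum σ P a = weightAway (SameCycle.setoid σ) P a *
      joinRate card (blocksIn (SameCycle.setoid σ) (block P a)) (block (SameCycle.setoid σ) a) := by
  set Q := SameCycle.setoid σ
  have term (b) (hb : b ∈ block P a \ block Q a) :
      cutJoinWeight (SameCycle.setoid (σ * swap a b)) P =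
        weightAway Q P a * (cycleWeight (#(block Q a) + #(block Q b)) /
          (cycleWeight #(block Q a) * cycleWeight #(block Q b)) *
          (#(block P a) : ℚ) ^ ((#(blocksIn Q (block P a)) : ℤ) - 4)) := by
    rw [mem_sdiff, mem_block, mem_block] at hb
    refine (merges_mul_swap_of_not_sameCycle hb.2).cutJoinWeight_join ?_
    exact (sameCycle_setoid_mul_le σ _).trans
      (sup_le hle (sameCycle_setoid_swap_le_iff.mpr hb.1))
  have card_eq : ∑ D ∈ blocksIn Q (block P a), (#D : ℚ) = #(block P a) := by
    rw [← sum_card_blocksIn fun x => block_subset_block hle (a := a) (x := x), Nat.cast_sum]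
  rw [joinSum, sum_congr rfl term, ← mul_sum, ← sum_mul, joinRate, card_eq, erase_blocksIn_block,
    sum_comp_block (fun _ => block_subset_sdiff_block hle) fun D =>
      cycleWeight (#(block Q a) + #D) / (cycleWeight #(block Q a) * cycleWeight #D)]
  simp only [nsmul_eq_mul, otherBlocks]

theorem cutSum_eq (hle : SameCycle.setoid σ ≤ P) (a : α) :
    cutSum σ P a = weightAway (SameCycle.setoid σ) P a *
      cutRate card (blocksIn (SameCycle.setoid σ) (block P a)) (block (SameCycle.setoid σ) a) := by
  rw [cutRate, ← sum_erase_block_mul_swap σ a fun s t =>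
    cycleWeight s * cycleWeight t / cycleWeight #(block (SameCycle.setoid σ) a) *
      splitSum (fun D => (#D : ℚ)) ((blocksIn (SameCycle.setoid σ) (block P a)).erase
        (block (SameCycle.setoid σ) a)) s t, mul_sum, cutSum]
  refine sum_congr rfl fun b hb => ?_
  obtain ⟨hba, hb⟩ := mem_erase.mp hb
  rw [erase_blocksIn_block]
  convert sum_cutJoinWeight_cut
    (merges_mul_swap_of_sameCycle (mem_block.mp hb) (Ne.symm hba)) hle

theorem sum_block_joinSum_add_cutSum (hle : SameCycle.setoid σ ≤ P) (x : α) :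
    ∑ a ∈ block P x, (joinSum σ P a + cutSum σ P a) =
      2 * (#(block P x) + #(blocksIn (SameCycle.setoid σ) (block P x)) - 2) *
        cutJoinWeight (SameCycle.setoid σ) P := by
  set Q := SameCycle.setoid σ
  set I := blocksIn Q (block P x)
  have saturated (a) (ha : a ∈ block P x) : block Q a ⊆ block P x := block_subset_block hle ha
  have term (a) (ha : a ∈ block P x) : joinSum σ P a + cutSum σ P a =
      weightAway Q P x * (joinRate card I (block Q a) + cutRate card I (block Q a)) := by
    have hblock : block P a = block P x := block_eq_block.mpr (P.symm (mem_block.mp ha))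
    rw [joinSum_eq hle, cutSum_eq hle, ← mul_add, weightAway, weightAway, hblock]
  have card_eq : ∑ D ∈ I, (#D : ℚ) = #(block P x) := by
    rw [← sum_card_blocksIn saturated, Nat.cast_sum]
  rw [sum_congr rfl term, ← mul_sum, sum_comp_block saturated fun C =>
    joinRate card I C + cutRate card I C]
  simp only [nsmul_eq_mul]
  rw [sum_mul_joinRate_add_cutRate ⟨_, block_mem_blocksIn Q (mem_block_self P x)⟩
    fun C hC => card_pos_of_mem_blocksIn hC, card_eq, cutJoinWeight_eq_weightAway_mul Q P x]
  ring

theorem sum_joinSum_add_cutSum (hle : SameCycle.setoid σ ≤ P) :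
    ∑ a, (joinSum σ P a + cutSum σ P a) =
      2 * (Fintype.card α + #(blocks (SameCycle.setoid σ)) - 2 * #(blocks P)) *
        cutJoinWeight (SameCycle.setoid σ) P := by
  have blockSum (B) (hB : B ∈ blocks P) : ∑ a ∈ B, (joinSum σ P a + cutSum σ P a) =
      2 * (#B + #(blocksIn (SameCycle.setoid σ) B) - 2) *
        cutJoinWeight (SameCycle.setoid σ) P := by
    obtain ⟨x, -, rfl⟩ := mem_image.mp hB
    exact sum_block_joinSum_add_cutSum hle x
  have saturated (x) (_ : x ∈ univ) : block P x ⊆ univ := subset_univ _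
  rw [← sum_blocksIn (P := P) saturated, sum_congr rfl blockSum, ← sum_mul, ← mul_sum,
    sum_sub_distrib, sum_add_distrib, ← Nat.cast_sum, ← Nat.cast_sum, sum_card_blocksIn saturated,
    sum_card_blocksIn_blocks hle, sum_const, nsmul_eq_mul, card_univ, mul_comm _ (2 : ℚ)]

end CutJoinEquation

/-! ### Counting factorizations into transpositions -/

section Extremes

variable {α : Type*} [Fintype α] {P Q : Setoid α}

theorem block_bot (x : α) : block ⊥ x = {x} := by
  ext y
  rw [mem_block, mem_singleton]
  exact eq_comm

variable [DecidableEq α]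

theorem card_blocks_le_card (P : Setoid α) : #(blocks P) ≤ Fintype.card α :=
  card_image_le

theorem eq_bot_of_card_blocks (h : #(blocks P) = Fintype.card α) : P = ⊥ :=
  eq_bot_iff.mpr fun x y hxy =>
    card_image_iff.mp h (mem_univ x) (mem_univ y) (block_eq_block.mpr hxy)

theorem card_blocks_anti (h : Q ≤ P) : #(blocks P) ≤ #(blocks Q) := by
  rw [← sum_card_blocksIn_blocks h, card_eq_sum_ones]
  refine sum_le_sum fun B hB => card_pos.mpr ?_
  obtain ⟨x, -, rfl⟩ := mem_image.mp hB
  exact ⟨_, block_mem_blocksIn Q (mem_block_self P x)⟩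

theorem card_blocksIn_bot (B : Finset α) : #(blocksIn ⊥ B) = #B :=
  card_image_of_injective B fun x y h => by rwa [block_bot, block_bot, singleton_inj] at h

theorem card_eq_one_of_mem_blocks_bot {C : Finset α} (h : C ∈ blocks ⊥) : #C = 1 := by
  obtain ⟨x, -, rfl⟩ := mem_image.mp h
  rw [block_bot, card_singleton]

theorem blocks_top [Nonempty α] : blocks (⊤ : Setoid α) = {univ} := by
  have block_top (x : α) : block ⊤ x = univ := eq_univ_of_forall fun y => mem_block.mpr trivial
  rw [blocks, blocksIn, funext block_top, image_const univ_nonempty]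

theorem cutJoinWeight_bot (P : Setoid α) :
    cutJoinWeight ⊥ P = ∏ B ∈ blocks P, (#B : ℚ) ^ ((#B : ℤ) - 3) := by
  have hcycle : ∏ C ∈ blocks (⊥ : Setoid α), cycleWeight #C = 1 :=
    prod_eq_one fun C hC => by simp [card_eq_one_of_mem_blocks_bot hC, cycleWeight, endoCoeff]
  simp only [cutJoinWeight, hcycle, one_mul, card_blocksIn_bot]

theorem cutJoinWeight_bot_bot : cutJoinWeight (⊥ : Setoid α) ⊥ = 1 := by
  rw [cutJoinWeight_bot]
  exact prod_eq_one fun B hB => by rw [card_eq_one_of_mem_blocks_bot hB, Nat.cast_one, one_zpow]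

theorem cutJoinWeight_bot_top [Nonempty α] :
    cutJoinWeight (⊥ : Setoid α) ⊤ = (Fintype.card α : ℚ) ^ ((Fintype.card α : ℤ) - 3) := by
  rw [cutJoinWeight_bot, blocks_top, prod_singleton, card_univ]

end Extremes

section Factorizations

open Equiv Equiv.Perm
open scoped Nat

section Sup

variable {α : Type*} {σ : Perm α} {r : ℕ}

theorem sameCycle_setoid_one : SameCycle.setoid (1 : Perm α) = ⊥ :=
  eq_bot_iff.mpr (sameCycle_setoid_le_iff.mpr fun _ => rfl)

theorem eq_one_of_sameCycle_setoid_eq_bot (h : SameCycle.setoid σ = ⊥) : σ = 1 := by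
  ext x
  have : SameCycle.setoid σ x (σ x) := sameCycle_setoid_apply σ x
  rw [h] at this
  exact Eq.symm this

theorem iSup_sameCycle_setoid {ι : Type*} (τ : ι → Perm α) : ⨆ i, SameCycle.setoid (τ i) =
    MulAction.orbitRel (Subgroup.closure (Set.range τ)) α := by
  refine le_antisymm (iSup_le fun i => sameCycle_setoid_le_iff.mpr fun x => ?_) ?_
  · exact Setoid.symm' _ ⟨⟨τ i, Subgroup.subset_closure ⟨i, rfl⟩⟩, rfl⟩
  · rintro _ y ⟨⟨ρ, hρ⟩, rfl⟩
    suffices h : ∀ z, (⨆ i, SameCycle.setoid (τ i)) z (ρ z) from Setoid.symm' _ (h y)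
    induction hρ using Subgroup.closure_induction with
    | mem s hs =>
      obtain ⟨i, rfl⟩ := hs
      exact fun z => le_iSup (fun i => SameCycle.setoid (τ i)) i (sameCycle_setoid_apply (τ i) z)
    | one => exact Setoid.refl' _
    | mul s t _ _ hs ht => exact fun z => Setoid.trans' _ (ht z) (hs (t z))
    | inv s _ hs =>
      refine fun z => Setoid.symm' _ ?_
      have := hs (s⁻¹ z)
      rwa [← Perm.mul_apply, mul_inv_cancel, Perm.one_apply] at this

theorem iSup_sameCycle_setoid_eq_top_iff {ι : Type*} {τ : ι → Perm α} :
    ⨆ i, SameCycle.setoid (τ i) = ⊤ ↔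
      ∀ x y, ∃ ρ ∈ Subgroup.closure (Set.range τ), ρ x = y := by
  rw [iSup_sameCycle_setoid, eq_top_iff]
  refine ⟨fun h x y => ?_, fun h x y _ => ?_⟩
  · obtain ⟨⟨ρ, hρ⟩, rfl⟩ := h (x := y) (y := x) trivial
    exact ⟨ρ, hρ, rfl⟩
  · obtain ⟨ρ, hρ, hyx⟩ := h y x
    exact ⟨⟨ρ, hρ⟩, hyx⟩

theorem iSup_fin_succ {L : Type*} [CompleteLattice L] (f : Fin (r + 1) → L) :
    ⨆ i, f i = (⨆ i : Fin r, f i.castSucc) ⊔ f (Fin.last r) :=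
  eq_of_forall_ge_iff fun c => by simp only [iSup_le_iff, sup_le_iff, Fin.forall_fin_succ']

end Sup

variable {α : Type*} [Fintype α] [DecidableEq α] {σ : Perm α} {P : Setoid α} {r : ℕ} {a b : α}

open Classical in
theorem two_mul_sum_isSwap (f : Perm α → ℕ) :
    2 * ∑ τ with τ.IsSwap, f τ = ∑ a, ∑ b ∈ univ.erase a, f (swap a b) := by
  have two_mul_eq (τ) (hτ : τ ∈ univ.filter (IsSwap (α := α))) :
      2 * f τ = ∑ _a ∈ τ.support, f τ := by
    rw [sum_const, card_support_eq_two.mpr ((mem_filter_univ τ).mp hτ), smul_eq_mul]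
  have swap_eq {τ : Perm α} (hτ : τ.IsSwap) {a : α} (ha : τ a ≠ a) : swap a (τ a) = τ := by
    refine (hτ.isCycle.eq_swap_of_apply_apply_eq_self ha ?_).symm
    obtain ⟨x, y, -, rfl⟩ := hτ
    exact swap_apply_self x y a
  rw [mul_sum, sum_congr rfl two_mul_eq, sum_sigma', sum_sigma']
  refine sum_bij' (fun x _ => ⟨x.2, x.1 x.2⟩) (fun x _ => ⟨swap x.1 x.2, x.1⟩) ?_ ?_ ?_ ?_ ?_
  all_goals simp only [mem_sigma, mem_filter_univ, mem_univ, mem_erase, mem_support, true_and,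
    and_true, swap_apply_left, implies_true]
  · exact fun x hx => hx.2
  · exact fun x hx => ⟨⟨x.1, x.2, hx.symm, rfl⟩, hx⟩
  · exact fun x hx => by rw [swap_eq hx.1 hx.2]
  · exact fun x hx => by rw [swap_eq hx.1 hx.2]

open Classical in
/-- The `r`-tuples of transpositions with product `σ` whose generated group has the classes of
`P` as orbits. -/
noncomputable def factorizations (r : ℕ) (σ : Perm α) (P : Setoid α) : Finset (Fin r → Perm α) :=
  {τ | (∀ i, (τ i).IsSwap) ∧ (List.ofFn τ).prod = σ ∧ ⨆ i, SameCycle.setoid (τ i) = P}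

theorem mem_factorizations {τ : Fin r → Perm α} : τ ∈ factorizations r σ P ↔
    (∀ i, (τ i).IsSwap) ∧ (List.ofFn τ).prod = σ ∧ ⨆ i, SameCycle.setoid (τ i) = P := by
  classical
  rw [factorizations, mem_filter_univ]

theorem mem_factorizations_zero {τ : Fin 0 → Perm α} :
    τ ∈ factorizations 0 σ P ↔ σ = 1 ∧ P = ⊥ := by
  rw [mem_factorizations, List.ofFn_zero, List.prod_nil, iSup_of_empty, and_iff_right finZeroElim,
    eq_comm, eq_comm (b := P)]

theorem mem_factorizations_succ {τ : Fin (r + 1) → Perm α} :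
    τ ∈ factorizations (r + 1) σ P ↔ (τ (Fin.last r)).IsSwap ∧
      ∃ P', P' ⊔ SameCycle.setoid (τ (Fin.last r)) = P ∧
        Fin.init τ ∈ factorizations r (σ * τ (Fin.last r)) P' := by
  have prod_iff (hτ : (τ (Fin.last r)).IsSwap) (ρ : Perm α) :
      ρ * τ (Fin.last r) = σ ↔ ρ = σ * τ (Fin.last r) := by
    obtain ⟨a, b, -, hlast⟩ := hτ
    rw [hlast, ← eq_mul_inv_iff_mul_eq, swap_inv]
  simp only [mem_factorizations, Fin.forall_fin_succ', iSup_fin_succ, List.ofFn_succ',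
    List.concat_eq_append, List.prod_append, List.prod_singleton]
  constructor
  · rintro ⟨⟨hinit, hlast⟩, hprod, hsup⟩
    exact ⟨hlast, _, hsup, hinit, (prod_iff hlast _).mp hprod, rfl⟩
  · rintro ⟨hlast, _, hsup, hinit, hprod, rfl⟩
    exact ⟨⟨hinit, hlast⟩, (prod_iff hlast _).mpr hprod, hsup⟩

open Classical in
/-- The number of elements of `factorizations (r + 1) σ P` whose last entry is the transposition
`s`. -/
noncomputable def countEnding (r : ℕ) (σ : Perm α) (P : Setoid α) (s : Perm α) : ℕ :=
  ∑ P' with P' ⊔ SameCycle.setoid s = P, #(factorizations r (σ * s) P')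

open Classical in
theorem card_factorizations_succ (r : ℕ) (σ : Perm α) (P : Setoid α) :
    #(factorizations (r + 1) σ P) = ∑ s with s.IsSwap, countEnding r σ P s := by
  simp only [countEnding, ← card_sigma]
  refine card_nbij' (fun τ => ⟨τ (Fin.last r), ⨆ i, SameCycle.setoid (Fin.init τ i), Fin.init τ⟩)
    (fun x => Fin.snoc x.2.2 x.1) (fun τ hτ => ?_) (fun x hx => ?_)
    (fun τ _ => Fin.snoc_init_self τ) fun x hx => ?_
  · obtain ⟨hlast, P', hsup, hinit⟩ := mem_factorizations_succ.mp hτ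
    obtain rfl := (mem_factorizations.mp hinit).2.2
    simpa only [mem_coe, mem_sigma, mem_filter_univ] using ⟨hlast, hsup, hinit⟩
  all_goals simp only [mem_coe, mem_sigma, mem_filter_univ] at hx
  · refine mem_factorizations_succ.mpr ?_
    simp only [Fin.snoc_last, Fin.init_snoc]
    exact ⟨hx.1, _, hx.2⟩
  · simp only [Fin.snoc_last, Fin.init_snoc, (mem_factorizations.mp hx.2.2).2.2, Sigma.eta]

theorem exists_factorizations_nonempty (h : (factorizations (r + 1) σ P).Nonempty) :
    ∃ a b P', a ≠ b ∧ P' ⊔ SameCycle.setoid (swap a b) = P ∧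
      (factorizations r (σ * swap a b) P').Nonempty := by
  obtain ⟨τ, hτ⟩ := h
  obtain ⟨⟨a, b, hab, hlast⟩, P', hP', hinit⟩ := mem_factorizations_succ.mp hτ
  rw [hlast] at hP' hinit
  exact ⟨a, b, P', hab, hP', _, hinit⟩

theorem sameCycle_setoid_le_of_factorizations_nonempty (h : (factorizations r σ P).Nonempty) :
    SameCycle.setoid σ ≤ P := by
  induction r generalizing σ P with
  | zero =>
    obtain ⟨τ, hτ⟩ := h
    obtain ⟨rfl, rfl⟩ := mem_factorizations_zero.mp hτ
    exact sameCycle_setoid_one.le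
  | succ r ih =>
    obtain ⟨a, b, P', -, rfl, h'⟩ := exists_factorizations_nonempty h
    rw [← mul_swap_mul_self a b σ]
    exact (sameCycle_setoid_mul_le _ _).trans (sup_le_sup_right (ih h') _)

/-- The Riemann–Hurwitz inequality. -/
theorem card_add_card_blocks_le_of_factorizations_nonempty (h : (factorizations r σ P).Nonempty) :
    Fintype.card α + #(blocks (SameCycle.setoid σ)) ≤ r + 2 * #(blocks P) := by
  induction r generalizing σ P with
  | zero =>
    obtain ⟨τ, hτ⟩ := h
    obtain ⟨rfl, rfl⟩ := mem_factorizations_zero.mp hτ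
    rw [sameCycle_setoid_one, card_blocksIn_bot, card_univ]
    omega
  | succ r ih =>
    obtain ⟨a, b, P', hab, hsup, h'⟩ := exists_factorizations_nonempty h
    have bound := ih h'
    have hle := sameCycle_setoid_le_of_factorizations_nonempty h'
    by_cases hP' : P' a b
    · obtain rfl : P' = P := by rwa [sup_eq_left.mpr (sameCycle_setoid_swap_le_iff.mpr hP')] at hsup
      by_cases hσ : SameCycle.setoid σ a b
      · have := (merges_mul_swap_of_sameCycle hσ hab).card_blocks
        omega
      · have := (merges_mul_swap_of_not_sameCycle hσ).card_blocks
        omega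
    · have hσ : SameCycle.setoid σ a b := by
        by_contra hσ
        exact hP' (hle (merges_mul_swap_of_not_sameCycle hσ).rel)
      have := (merges_mul_swap_of_sameCycle hσ hab).card_blocks
      have := (⟨hsup, hP'⟩ : Merges P' P a b).card_blocks
      omega

theorem countEnding_of_not_rel (h : ¬P a b) : countEnding r σ P (swap a b) = 0 := by
  classical
  rw [countEnding, filter_false_of_mem, sum_empty]
  rintro P' - rfl
  exact h (sameCycle_setoid_swap_le_iff.mp le_sup_right)

theorem countEnding_join (hP : P a b) (hσ : ¬SameCycle.setoid σ a b) :
    countEnding r σ P (swap a b) = #(factorizations r (σ * swap a b) P) := by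
  classical
  refine sum_eq_single_of_mem P ?_ fun P' hP' hne => ?_
  · rw [mem_filter_univ, sup_eq_left, sameCycle_setoid_swap_le_iff]
    exact hP
  · refine card_eq_zero.mpr (not_nonempty_iff_eq_empty.mp fun h => hne ?_)
    have hab := sameCycle_setoid_le_of_factorizations_nonempty h
      (merges_mul_swap_of_not_sameCycle hσ).rel
    rwa [mem_filter_univ, sup_eq_left.mpr (sameCycle_setoid_swap_le_iff.mpr hab)] at hP'

open Classical in
/-- As `r + 1` is the minimal length, no `r` transpositions with product `σ * swap a b` generate a
group with orbits `P`, so removing the last transposition separates `a` from `b`. -/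
theorem countEnding_cut (hσ : SameCycle.setoid σ a b) (hab : a ≠ b)
    (hr : r + 1 + 2 * #(blocks P) = Fintype.card α + #(blocks (SameCycle.setoid σ))) :
    countEnding r σ P (swap a b) =
      ∑ P' with Merges P' P a b ∧ SameCycle.setoid (σ * swap a b) ≤ P',
        #(factorizations r (σ * swap a b) P') := by
  refine (sum_subset (fun P' hP' => ?_) fun P' hP' hnot => ?_).symm
  · rw [mem_filter_univ] at hP' ⊢
    exact hP'.1.sup_eq
  · rw [mem_filter_univ] at hP' hnot
    refine card_eq_zero.mpr (not_nonempty_iff_eq_empty.mp fun h => hnot ⟨⟨hP', fun hrel => ?_⟩,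
      sameCycle_setoid_le_of_factorizations_nonempty h⟩)
    rw [sup_eq_left.mpr (sameCycle_setoid_swap_le_iff.mpr hrel)] at hP'
    subst hP'
    have := card_add_card_blocks_le_of_factorizations_nonempty h
    have := (merges_mul_swap_of_sameCycle hσ hab).card_blocks
    omega

theorem sum_countEnding_eq (hle : SameCycle.setoid σ ≤ P) (a : α) :
    ∑ b ∈ univ.erase a, countEnding r σ P (swap a b) =
      ∑ b ∈ block P a \ block (SameCycle.setoid σ) a, countEnding r σ P (swap a b) +
      ∑ b ∈ (block (SameCycle.setoid σ) a).erase a, countEnding r σ P (swap a b) := by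
  have sdiff_eq : (block P a).erase a \ (block (SameCycle.setoid σ) a).erase a =
      block P a \ block (SameCycle.setoid σ) a := by
    rw [← erase_sdiff_distrib, erase_eq_of_notMem]
    exact fun h => (mem_sdiff.mp h).2 (mem_block_self _ a)
  rw [← sdiff_eq, sum_sdiff (erase_subset_erase a (block_subset_block hle (mem_block_self P a)))]
  refine (sum_subset (erase_subset_erase a (subset_univ _)) fun b hb hnot => ?_).symm
  exact countEnding_of_not_rel fun h => hnot (mem_erase.mpr ⟨(mem_erase.mp hb).1, mem_block.mpr h⟩)

theorem sum_countEnding_eq_mul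
    (ih : ∀ (ρ : Perm α) (P' : Setoid α), SameCycle.setoid ρ ≤ P' →
      r + 2 * #(blocks P') = Fintype.card α + #(blocks (SameCycle.setoid ρ)) →
        (#(factorizations r ρ P') : ℚ) = r ! * cutJoinWeight (SameCycle.setoid ρ) P')
    (hle : SameCycle.setoid σ ≤ P)
    (hr : r + 1 + 2 * #(blocks P) = Fintype.card α + #(blocks (SameCycle.setoid σ))) (a : α) :
    ((∑ b ∈ univ.erase a, countEnding r σ P (swap a b) : ℕ) : ℚ) =
      r ! * (joinSum σ P a + cutSum σ P a) := by
  classical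
  rw [sum_countEnding_eq hle, Nat.cast_add, Nat.cast_sum, Nat.cast_sum, joinSum, cutSum, mul_add,
    mul_sum, mul_sum]
  congr 1 <;> refine sum_congr rfl fun b hb => ?_
  · rw [mem_sdiff, mem_block, mem_block] at hb
    have := (merges_mul_swap_of_not_sameCycle hb.2).card_blocks
    rw [countEnding_join hb.1 hb.2, ih _ P ?_ (by omega)]
    exact (sameCycle_setoid_mul_le σ _).trans (sup_le hle (sameCycle_setoid_swap_le_iff.mpr hb.1))
  · obtain ⟨hba, hb⟩ := mem_erase.mp hb
    have hcut := merges_mul_swap_of_sameCycle (mem_block.mp hb) (Ne.symm hba)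
    have := hcut.card_blocks
    rw [countEnding_cut (mem_block.mp hb) (Ne.symm hba) hr, Nat.cast_sum, mul_sum]
    refine sum_congr rfl fun P' hP' => ?_
    obtain ⟨hP', hle'⟩ := (mem_filter_univ P').mp hP'
    have := hP'.card_blocks
    exact ih _ P' hle' (by omega)

theorem card_factorizations (hle : SameCycle.setoid σ ≤ P)
    (hr : r + 2 * #(blocks P) = Fintype.card α + #(blocks (SameCycle.setoid σ))) :
    (#(factorizations r σ P) : ℚ) = r ! * cutJoinWeight (SameCycle.setoid σ) P := by
  induction r generalizing σ P with
  | zero =>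
    have := card_blocks_anti hle
    have := card_blocks_le_card (SameCycle.setoid σ)
    obtain rfl : P = ⊥ := eq_bot_of_card_blocks (by omega)
    obtain rfl : σ = 1 := eq_one_of_sameCycle_setoid_eq_bot (le_bot_iff.mp hle)
    have factorizations_eq : factorizations 0 (1 : Perm α) ⊥ = univ :=
      eq_univ_of_forall fun τ => mem_factorizations_zero.mpr ⟨rfl, rfl⟩
    rw [factorizations_eq, sameCycle_setoid_one, cutJoinWeight_bot_bot, card_univ,
      Fintype.card_unique, Nat.factorial_zero, Nat.cast_one, mul_one]
  | succ r ih =>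
    have double : 2 * (#(factorizations (r + 1) σ P) : ℚ) =
        r ! * (2 * (r + 1) * cutJoinWeight (SameCycle.setoid σ) P) := by
      have hr' : (r : ℚ) + 1 =
          Fintype.card α + #(blocks (SameCycle.setoid σ)) - 2 * #(blocks P) := by
        rw [eq_sub_iff_add_eq]
        exact_mod_cast hr
      rw [hr', ← sum_joinSum_add_cutSum hle, mul_sum, ← sum_congr rfl fun a _ =>
        sum_countEnding_eq_mul (fun _ _ => ih) hle hr a]
      exact_mod_cast (card_factorizations_succ r σ P) ▸ two_mul_sum_isSwap (countEnding r σ P)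
    rw [Nat.factorial_succ]
    push_cast
    linear_combination double / 2

theorem card_factorizations_one_top [Nonempty α] :
    (#(factorizations (2 * Fintype.card α - 2) (1 : Perm α) ⊤) : ℚ) =
      (2 * Fintype.card α - 2)! * (Fintype.card α : ℚ) ^ ((Fintype.card α : ℤ) - 3) := by
  rw [card_factorizations le_top, sameCycle_setoid_one, cutJoinWeight_bot_top]
  have := Fintype.card_pos (α := α)
  rw [blocks_top, sameCycle_setoid_one, card_blocksIn_bot, card_singleton, card_univ]
  omega

theorem hurwitzTupleCount_eq_card_factorizations (d r : ℕ) :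
    hurwitzTupleCount d r = #(factorizations r (1 : Perm (Fin d)) ⊤) :=
  Nat.subtype_card _ fun τ => by
    rw [mem_factorizations, iSup_sameCycle_setoid_eq_top_iff]

end Factorizations

end CutJoin

/-- For every `d ≥ 1`, the genus `0` Hurwitz number satisfies
`H_{0,d} = (2d - 2)! ⬝ d^(d-3) / d!` in `ℚ`; equivalently, the count of tuples of
transpositions times `d³` equals `(2d - 2)! ⬝ d^d`. -/
theorem genus_zero_hurwitz_formula (d : ℕ) (hd : 1 ≤ d) :
    hurwitzNumber 0 d =
      ((2 * d - 2).factorial : ℚ) * (d : ℚ) ^ d / ((d : ℚ) ^ 3 * (Nat.factorial d : ℚ)) ∧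
    hurwitzTupleCount d (2 * d - 2) * d ^ 3 = (2 * d - 2).factorial * d ^ d := by
  have : NeZero d := ⟨Nat.one_le_iff_ne_zero.mp hd⟩
  have hd0 : (d : ℚ) ≠ 0 := NeZero.ne _
  have count : (hurwitzTupleCount d (2 * d - 2) : ℚ) =
      (2 * d - 2).factorial * ((d : ℚ) ^ d / (d : ℚ) ^ 3) := by
    rw [CutJoin.hurwitzTupleCount_eq_card_factorizations]
    have := CutJoin.card_factorizations_one_top (α := Fin d)
    rwa [Fintype.card_fin, zpow_sub₀ hd0, zpow_natCast, zpow_ofNat] at this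
  constructor
  · have : (d.factorial : ℚ) ≠ 0 := mod_cast d.factorial_ne_zero
    rw [hurwitzNumber, mul_zero, zero_add, count]
    field_simp
  · have : (hurwitzTupleCount d (2 * d - 2) : ℚ) * d ^ 3 = (2 * d - 2).factorial * d ^ d := by
      rw [count]
      field_simp
    exact_mod_cast this
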